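/- arXiv:2405.15263 — 18 statements merged into one kernel-verified Lean document; each statement's English description precedes it below -/
import Mathlib

section
/- Let (X,d) be a metric space, Σ a nonempty family of nonempty subsets of X, and f : X → ℝ. If Player I has a winning strategy in the game G_{<ω}(Σ,f), then Player I has a winning strategy in the game G_1(Σ,f). -/
/-!
Write `ρ` for the distance between points `(x, f x)` of the graph of `f` in `X × ℝ`, so that
Player II wins a run exactly when the points played by Player I `ρ`-converge.

If some `y` had members of `Σ` below `P` inside arbitrarily small `ρ`-balls around `y`, then
Player II could beat any strategy of Player I in `G_{<ω}(Σ, f)` opened with `P`, by playing such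
sets for radii `1 / (n + 1)`. So a winning strategy of Player I there gives, for each `y`, a radius
`ε > 0` such that no legal set fits into the `ρ`-ball of radius `ε` around `y`
(`exists_radius_of_GfinWinI`).

In `G₁(Σ, f)` Player I opens with the same `P` and always plays a point of the current set that is,
up to a factor `2` and truncation at `1`, as `ρ`-far as possible from the previous point
(`exists_far_point`). If the points converged to `y` with radius `ε`, each set would contain a
point `ρ`-far from `y`, hence from the previous point, so consecutive points would stay
`min 1 (ε / 2) / 2` apart, which contradicts convergence.
-/

open Filter Topology

/-- The winning condition for Player II in the game `G_{<ω}(Σ, f)` for a run in which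
Player I played the nonempty finite blocks `b 0, b 1, …`: the infinite sequence obtained by
concatenating the blocks converges to some `y` and its `f`-images converge to `f y`.
(For nonempty blocks this is equivalent to: there is `y` such that for every `ε > 0`,
all points of all but finitely many blocks are `ε`-close to `y` and have `f`-values
`ε`-close to `f y`, which is how it is formulated here.) -/
def BlocksWin {X : Type*} [MetricSpace X] (f : X → ℝ) (b : ℕ → List X) : Prop :=
  ∃ y : X, ∀ ε : ℝ, 0 < ε → ∃ N : ℕ, ∀ n ≥ N, ∀ x ∈ b n,
    dist x y < ε ∧ dist (f x) (f y) < ε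

/-- Player I has a winning strategy in the point-set game `G_{<ω}(Σ, f)`:
there are an initial move `P ∈ Σ` and a strategy `τ` (assigning a nonempty finite block of
points to every finite sequence of sets played so far by Player II) such that against every
legal play `Q : ℕ → Set X` of Player II (each `Q n ∈ Σ`, `Q n ⊆ P`), all blocks played by
`τ` are legal (nonempty and contained in Player II's previous set) and the concatenated
sequence of points does NOT converge to a point `y` with `f`-values converging to `f y`. -/
def GfinWinI {X : Type*} [MetricSpace X] (S : Set (Set X)) (f : X → ℝ) : Prop :=
  ∃ P ∈ S, ∃ τ : List (Set X) → List X,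
    ∀ Q : ℕ → Set X,
      (∀ n : ℕ, Q n ∈ S ∧ Q n ⊆ P) →
      (∀ n : ℕ, τ (List.ofFn fun i : Fin (n + 1) => Q i.1) ≠ [] ∧
        ∀ x ∈ τ (List.ofFn fun i : Fin (n + 1) => Q i.1), x ∈ Q n) ∧
      ¬ BlocksWin f (fun n => τ (List.ofFn fun i : Fin (n + 1) => Q i.1))

/-- Player I has a winning strategy in the point-set game `G₁(Σ, f)`:
there are an initial move `P ∈ Σ` and a strategy `τ` (assigning a point to every finite
sequence of sets played so far by Player II) such that against every legal play
`Q : ℕ → Set X` of Player II (each `Q n ∈ Σ`, `Q n ⊆ P`), all moves of `τ` are legal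
(the point played after seeing `Q 0, …, Q n` lies in `Q n`) and the resulting sequence of
points does NOT converge to a point `y` with `f`-values converging to `f y`. -/
def G1WinI {X : Type*} [MetricSpace X] (S : Set (Set X)) (f : X → ℝ) : Prop :=
  ∃ P ∈ S, ∃ τ : List (Set X) → X,
    ∀ Q : ℕ → Set X,
      (∀ n : ℕ, Q n ∈ S ∧ Q n ⊆ P) →
      (∀ n : ℕ, τ (List.ofFn fun i : Fin (n + 1) => Q i.1) ∈ Q n) ∧
      ¬ ∃ y : X,
          Tendsto (fun n => τ (List.ofFn fun i : Fin (n + 1) => Q i.1)) atTop (nhds y) ∧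
          Tendsto (fun n => f (τ (List.ofFn fun i : Fin (n + 1) => Q i.1))) atTop
            (nhds (f y))

/-- In a nonempty set, some point is at least half as far from `a` as every other point, where
distances to the competing points are truncated at `1` so that unbounded sets are allowed. -/
theorem exists_far_point {X Y : Type*} [MetricSpace Y] (g : X → Y) (Q : Set X)
    (hQ : Q.Nonempty) (a : X) :
    ∃ x ∈ Q, ∀ z ∈ Q, min 1 (dist (g z) (g a)) ≤ 2 * dist (g x) (g a) := by
  set F : X → ℝ := fun z => min 1 (dist (g z) (g a)) with hF
  have hbdd : BddAbove (F '' Q) := by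
    refine ⟨1, ?_⟩
    rintro _ ⟨z, _, rfl⟩
    exact min_le_left _ _
  have hle : ∀ z ∈ Q, F z ≤ sSup (F '' Q) := fun z hz =>
    le_csSup hbdd (Set.mem_image_of_mem F hz)
  rcases le_or_gt (sSup (F '' Q)) 0 with h0 | h0
  · obtain ⟨x, hx⟩ := hQ
    refine ⟨x, hx, fun z hz => ?_⟩
    have h1 := hle z hz
    have h2 : 0 ≤ dist (g x) (g a) := dist_nonneg
    change F z ≤ _
    linarith
  · obtain ⟨_, ⟨x, hx, rfl⟩, hlt⟩ :=
      exists_lt_of_lt_csSup (hQ.image F) (half_lt_self h0)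
    refine ⟨x, hx, fun z hz => ?_⟩
    have h1 := hle z hz
    have h2 : F x ≤ dist (g x) (g a) := min_le_right _ _
    change F z ≤ _
    linarith

/-- The only consequence of a winning strategy in `G_{<ω}(Σ, f)` that is needed: every point `y` of
`X` has a ball, in the graph metric, containing no legal set. -/
theorem exists_radius_of_GfinWinI {X : Type*} [MetricSpace X] (S : Set (Set X)) (f : X → ℝ)
    (h : GfinWinI S f) :
    ∃ P ∈ S, ∀ y : X, ∃ ε : ℝ, 0 < ε ∧ ∀ Q ∈ S, Q ⊆ P →
      ∃ z ∈ Q, ε ≤ dist (z, f z) (y, f y) := by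
  obtain ⟨P, hP, τ, hτ⟩ := h
  refine ⟨P, hP, fun y => ?_⟩
  by_contra! hc
  choose Q hQS hQP hQ using fun n : ℕ => hc (1 / ((n : ℝ) + 1)) Nat.one_div_pos_of_nat
  obtain ⟨hlegal, hlose⟩ := hτ Q fun n => ⟨hQS n, hQP n⟩
  refine hlose ⟨y, fun ε hε => ?_⟩
  obtain ⟨N, hN⟩ := exists_nat_one_div_lt hε
  refine ⟨N, fun n hn x hx => ?_⟩
  have h1 := hQ n x ((hlegal n).2 x hx)
  have h2 : 1 / ((n : ℝ) + 1) ≤ 1 / ((N : ℝ) + 1) := Nat.one_div_le_one_div hn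
  have h3 : dist (x, f x) (y, f y) < ε := by linarith
  rw [Prod.dist_eq] at h3
  exact max_lt_iff.mp h3

/-- If Player I has a winning strategy in the game `G_{<ω}(Σ, f)`, then Player I has a
winning strategy in the game `G₁(Σ, f)`. -/
theorem playerI_G1_of_playerI_Gfin {X : Type*} [MetricSpace X] (S : Set (Set X))
    (hS : S.Nonempty) (hSne : ∀ P ∈ S, P.Nonempty) (f : X → ℝ)
    (h : GfinWinI S f) : G1WinI S f := by
  obtain ⟨P, hP, hrad⟩ := exists_radius_of_GfinWinI S f h
  set g : X → X × ℝ := fun x => (x, f x) with hg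
  have hpick : ∀ (Q : Set X) (a : X), ∃ x, Q.Nonempty →
      x ∈ Q ∧ ∀ z ∈ Q, min 1 (dist (g z) (g a)) ≤ 2 * dist (g x) (g a) := by
    intro Q a
    by_cases hQ : Q.Nonempty
    · obtain ⟨x, hx⟩ := exists_far_point g Q hQ a
      exact ⟨x, fun _ => hx⟩
    · exact ⟨a, fun h' => absurd h' hQ⟩
  choose pick hpick using hpick
  obtain ⟨a₀, -⟩ := hSne P hP
  -- The previous point is recomputed from the history by a left fold; `a₀` is only a seed.
  refine ⟨P, hP, fun l => l.foldl (fun a Q => pick Q a) a₀, fun Q hQ => ?_⟩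
  set x : ℕ → X := fun n =>
    (List.ofFn fun i : Fin n => Q i.1).foldl (fun a Q => pick Q a) a₀ with hx
  have hstep : ∀ n, x (n + 1) = pick (Q n) (x n) := by
    intro n
    simp only [hx, List.ofFn_succ_last, List.foldl_append]
    simp
  have hspec : ∀ n, x (n + 1) ∈ Q n ∧
      ∀ z ∈ Q n, min 1 (dist (g z) (g (x n))) ≤ 2 * dist (g (x (n + 1))) (g (x n)) := by
    intro n
    rw [hstep]
    exact hpick (Q n) (x n) (hSne _ (hQ n).1)
  refine ⟨fun n => (hspec n).1, ?_⟩
  rintro ⟨y, hy, hfy⟩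
  obtain ⟨ε, hε, hfar⟩ := hrad y
  have hlim : Tendsto (fun n => g (x (n + 1))) atTop (𝓝 (g y)) := hy.prodMk_nhds hfy
  -- Within `δ` of `g y`, two consecutive points are less than `min 1 (ε / 2) / 2` apart.
  set δ : ℝ := min 1 (ε / 2) / 4 with hδ
  have hδpos : 0 < δ := by positivity
  obtain ⟨N, hN⟩ := Metric.tendsto_atTop.mp hlim δ hδpos
  have h0 := hN N le_rfl
  have h1 := hN (N + 1) (Nat.le_succ N)
  obtain ⟨z, hz, hzy⟩ := hfar (Q (N + 1)) (hQ _).1 (hQ _).2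
  have h2 := (hspec (N + 1)).2 z hz
  have h3 := dist_triangle_right (g (x (N + 1 + 1))) (g (x (N + 1))) (g y)
  have h4 : ε ≤ dist (g z) (g (x (N + 1))) + dist (g (x (N + 1))) (g y) :=
    hzy.trans (dist_triangle _ _ _)
  have h5 : min 1 (ε / 2) ≤ 1 := min_le_left _ _
  have h6 : min 1 (ε / 2) ≤ ε / 2 := min_le_right _ _
  have h7 : min 1 (ε / 2) ≤ min 1 (dist (g z) (g (x (N + 1)))) :=
    le_min h5 (by linarith)
  linarith
end

section
/- Let (X,d) be a metric space, Σ a nonempty family of nonempty subsets of X, and f : X → ℝ. If Player II has a winning strategy in the game G_1(Σ,f), then Player II has a winning strategy in the game G_{<ω}(Σ,f). -/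
/-! Fix the set `P` opened by Player I and a winning strategy `τ` for Player II in the one-point
game, and measure points by `g x = (x, f x)` in `X × ℝ`.

Every legal position `p` extends, for every `ε > 0`, to a legal position `q` such that `g` maps
`τ q` to a set with all distances below `ε` (`exists_small_extension`). Otherwise, from `p` on,
Player I could always play a point whose `g`-value is at distance at least `ε / 2` from that of the
previous point, producing a legal run along which `g` does not converge.

In the finite-block game, Player II keeps a legal position `q` of the one-point game for which
`g (τ q)` is small, and plays `τ q`. When Player I answers with a block inside `τ q`, Player II
appends only the head of the block to `q` and extends the result to the next such position. These
positions exhaust one legal run of the one-point game, which converges with its `f`-values. It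
contains the heads of all blocks, and the rest of each block is `g`-close to its head. -/

open Filter Topology

/-- Player II has a winning strategy in the point-set game `G₁(Σ, f)`:
there is a strategy `σ` (assigning to the initial set `P` played by Player I and the finite
sequence of points played so far by Player I a set, intended as Player II's next move) such
that all its moves are legal (members of `Σ` that are subsets of `P`) and for every run
`x : ℕ → X` of Player I that is legal against `σ` (i.e. `x n` belongs to the set played by
Player II at the previous stage), the sequence `x` converges to some `y` and `f ∘ x`
converges to `f y`. -/
def G1WinII {X : Type*} [MetricSpace X] (S : Set (Set X)) (f : X → ℝ) : Prop :=
  ∃ σ : Set X → List X → Set X,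
    ∀ P ∈ S,
      (∀ h : List X, σ P h ∈ S ∧ σ P h ⊆ P) ∧
      ∀ x : ℕ → X,
        (∀ n : ℕ, x n ∈ σ P (List.ofFn fun i : Fin n => x i.1)) →
        ∃ y : X, Tendsto x atTop (nhds y) ∧
          Tendsto (fun n => f (x n)) atTop (nhds (f y))

/-- Player II has a winning strategy in the point-set game `G_{<ω}(Σ, f)`:
there is a strategy `σ` (assigning to the initial set `P ∈ Σ` played by Player I and the
finite sequence of nonempty finite blocks of points played so far by Player I a set) such
that all its moves are legal (members of `Σ` that are subsets of `P`) and for every legal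
run `b : ℕ → List X` of Player I (each block nonempty, contained in Player II's previous
set), the concatenated sequence converges to some `y` with `f`-values converging
to `f y`. -/
def GfinWinII {X : Type*} [MetricSpace X] (S : Set (Set X)) (f : X → ℝ) : Prop :=
  ∃ σ : Set X → List (List X) → Set X,
    ∀ P ∈ S,
      (∀ h : List (List X), σ P h ∈ S ∧ σ P h ⊆ P) ∧
      ∀ b : ℕ → List X,
        (∀ n : ℕ, b n ≠ [] ∧ ∀ x ∈ b n, x ∈ σ P (List.ofFn fun i : Fin n => b i.1)) →
        BlocksWin f b

/-- A finite sequence `q` of points is a legal position against the strategy `τ`: each of its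
points belongs to the answer of `τ` to the points before it. -/
def LegalPos {X : Type*} (τ : List X → Set X) (q : List X) : Prop :=
  ∀ r x, r ++ [x] <+: q → x ∈ τ r

lemma LegalPos.snoc {X : Type*} {τ : List X → Set X} {q : List X} (hq : LegalPos τ q) {x : X}
    (hx : x ∈ τ q) : LegalPos τ (q ++ [x]) := by
  intro r y hr
  rcases List.prefix_concat_iff.1 hr with h | h
  · obtain ⟨rfl, h2⟩ := List.append_inj' h rfl
    simp only [List.cons.injEq, and_true] at h2
    exact h2 ▸ hx
  · exact hq r y h

lemma LegalPos.nil {X : Type*} (τ : List X → Set X) : LegalPos τ [] := by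
  intro r x h
  simp at h

/-- Legal positions of unbounded length, each a prefix of the next, are initial segments of a
common infinite legal run. -/
lemma exists_run {X : Type*} {τ : List X → Set X} (q : ℕ → List X)
    (hleg : ∀ n, LegalPos τ (q n)) (hpre : ∀ n, q n <+: q (n + 1))
    (hlen : ∀ n, n ≤ (q n).length) :
    ∃ x : ℕ → X, (∀ n, x n ∈ τ (List.ofFn fun i : Fin n => x i.1)) ∧
      ∀ n k (h : k < (q n).length), (q n)[k] = x k := by
  have hmono : ∀ m n, m ≤ n → q m <+: q n := by
    intro m n hmn
    induction n, hmn using Nat.le_induction with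
    | base => exact List.prefix_rfl
    | succ n _ ih => exact ih.trans (hpre n)
  have hval : ∀ n k (h : k < (q n).length), (q n)[k] = (q (k + 1))[k]'(hlen (k + 1)) := by
    intro n k h
    rcases le_total n (k + 1) with h1 | h1
    · exact (hmono _ _ h1).getElem h
    · exact ((hmono _ _ h1).getElem (hlen (k + 1))).symm
  refine ⟨fun k => (q (k + 1))[k]'(hlen (k + 1)), fun n => ?_, hval⟩
  apply hleg (n + 1)
  have e : (List.ofFn fun i : Fin n => (q (i.1 + 1))[i.1]'(hlen (i.1 + 1))) = (q (n + 1)).take n := by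
    apply List.ext_getElem
    · have := hlen (n + 1)
      simp
      omega
    · intro i h1 h2
      simp only [List.getElem_ofFn, List.getElem_take]
      exact (hval _ _ _).symm
  rw [e, List.take_append_getElem]
  exact ⟨_, List.take_append_drop _ _⟩

/-- If `g` is Cauchy along every legal run, then every legal position extends to a legal position
at which the strategy answers with a set of small `g`-image. -/
lemma exists_small_extension {X Y : Type*} [MetricSpace Y] {τ : List X → Set X} (g : X → Y)
    (hwin : ∀ x : ℕ → X, (∀ n, x n ∈ τ (List.ofFn fun i : Fin n => x i.1)) →
      CauchySeq fun n => g (x n))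
    (p : List X) (hp : LegalPos τ p) {ε : ℝ} (hε : 0 < ε) :
    ∃ q, p <+: q ∧ LegalPos τ q ∧ ∀ u ∈ τ q, ∀ v ∈ τ q, dist (g u) (g v) < ε := by
  by_contra! hcon
  have hstep : ∀ q : {q : List X // p <+: q ∧ LegalPos τ q},
      ∃ x ∈ τ q.1, ∀ z ∈ q.1.getLast?, ε / 2 ≤ dist (g z) (g x) := by
    rintro ⟨q, hpq, hq⟩
    obtain ⟨u, hu, v, hv, huv⟩ := hcon q hpq hq
    rcases hl : q.getLast? with _ | z
    · exact ⟨u, hu, by simp⟩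
    · rcases le_or_gt (ε / 2) (dist (g z) (g u)) with h | h
      · exact ⟨u, hu, by simpa using h⟩
      · refine ⟨v, hv, ?_⟩
        have := dist_triangle_left (g u) (g v) (g z)
        simp only [Option.mem_def, Option.some.injEq, forall_eq']
        linarith
  choose s hs hfar using hstep
  let c : ℕ → {q : List X // p <+: q ∧ LegalPos τ q} := fun n =>
    Nat.rec ⟨p, List.prefix_rfl, hp⟩
      (fun _ q => ⟨q.1 ++ [s q], q.2.1.trans (List.prefix_append _ _), q.2.2.snoc (hs q)⟩) n
  have hc : ∀ n, (c (n + 1)).1 = (c n).1 ++ [s (c n)] := fun n => rfl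
  have hlen : ∀ n, (c n).1.length = p.length + n := by
    intro n
    induction n with
    | zero => rfl
    | succ n ih => rw [hc, List.length_append, ih]; rfl
  obtain ⟨x, hx, hxc⟩ := exists_run (fun n => (c n).1) (fun n => (c n).2.2)
    (fun n => hc n ▸ List.prefix_append _ _) (fun n => by rw [hlen]; omega)
  obtain ⟨N, hN⟩ := Metric.cauchySeq_iff.1 (hwin x hx) (ε / 2) (by positivity)
  -- The points of indices `p.length + N` and `p.length + N + 1` are consecutive choices of `s`.
  have hlast : ∀ n, x (p.length + n) = s (c n) := by
    intro n
    rw [← hxc (n + 1) (p.length + n) (by simp only [hlen]; omega)]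
    simp [hc, ← hlen n]
  have h1 := hfar (c (N + 1)) (s (c N)) (by simp [hc])
  rw [← hlast N, ← hlast (N + 1)] at h1
  exact absurd (hN (p.length + N) (by omega) (p.length + (N + 1)) (by omega)) (not_lt.2 h1)

/-- If Player II has a winning strategy in the game `G₁(Σ, f)`, then Player II has a
winning strategy in the game `G_{<ω}(Σ, f)`. -/
theorem playerII_Gfin_of_playerII_G1 {X : Type*} [MetricSpace X] (S : Set (Set X))
    (hS : S.Nonempty) (hSne : ∀ P ∈ S, P.Nonempty) (f : X → ℝ)
    (h : G1WinII S f) : GfinWinII S f := by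
  obtain ⟨σ, hσ⟩ := h
  suffices H : ∀ P ∈ S, ∃ ρ : List (List X) → Set X, (∀ h, ρ h ∈ S ∧ ρ h ⊆ P) ∧
      ∀ b : ℕ → List X,
        (∀ n : ℕ, b n ≠ [] ∧ ∀ x ∈ b n, x ∈ ρ (List.ofFn fun i : Fin n => b i.1)) →
        BlocksWin f b by
    choose! ρ hρ using H
    exact ⟨ρ, hρ⟩
  intro P hP
  obtain ⟨hmem, hwin⟩ := hσ P hP
  have hwin' : ∀ x : ℕ → X, (∀ n, x n ∈ σ P (List.ofFn fun i : Fin n => x i.1)) →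
      CauchySeq fun n => (x n, f (x n)) := by
    intro x hx
    obtain ⟨y, h1, h2⟩ := hwin x hx
    exact (h1.prodMk_nhds h2).cauchySeq
  -- The bound `1 / (p.length + 1)` tends to zero because the positions keep getting longer.
  have hE : ∀ p, LegalPos (σ P) p → ∃ q, p <+: q ∧ LegalPos (σ P) q ∧
      ∀ u ∈ σ P q, ∀ v ∈ σ P q, dist (u, f u) (v, f v) < 1 / ((p.length : ℝ) + 1) :=
    fun p hp => exists_small_extension (fun x => (x, f x)) hwin' p hp Nat.one_div_pos_of_nat
  choose! E hEpre hEleg hEsmall using hE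
  let Q : List (List X) → List X := fun h => h.foldl (fun q b => E (q ++ b.take 1)) (E [])
  refine ⟨fun h => σ P (Q h), fun h => hmem _, fun b hb => ?_⟩
  let q : ℕ → List X := fun n => Q (List.ofFn fun i : Fin n => b i.1)
  choose hne hb using hb
  let a : ℕ → X := fun n => (b n).head (hne n)
  have ha : ∀ n, a n ∈ σ P (q n) := fun n => hb n _ (List.head_mem _)
  have hq0 : q 0 = E [] := by simp [q, Q]
  have hq : ∀ n, q (n + 1) = E (q n ++ [a n]) := by
    intro n
    have hhead : ∀ (l : List X) (hl : l ≠ []), l.take 1 = [l.head hl] := by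
      intro l hl
      cases l with
      | nil => exact absurd rfl hl
      | cons z l => simp
    have : (b n).take 1 = [a n] := hhead _ (hne n)
    simp only [q, Q, List.ofFn_succ', List.concat_eq_append, List.foldl_append, List.foldl_cons,
      List.foldl_nil, Fin.val_castSucc, Fin.val_last, this]
  have hleg : ∀ n, LegalPos (σ P) (q n) := by
    intro n
    induction n with
    | zero => exact hq0 ▸ hEleg _ (LegalPos.nil _)
    | succ n ih => exact hq n ▸ hEleg _ (ih.snoc (ha n))
  have hpre' : ∀ n, q n ++ [a n] <+: q (n + 1) := fun n =>
    hq n ▸ hEpre _ ((hleg n).snoc (ha n))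
  have hlen : ∀ n, n ≤ (q n).length := by
    intro n
    induction n with
    | zero => exact Nat.zero_le _
    | succ n ih =>
      have := (hpre' n).length_le
      simp only [List.length_append, List.length_singleton] at this
      omega
  have hsmall : ∀ n, ∀ u ∈ σ P (q n), ∀ v ∈ σ P (q n),
      dist (u, f u) (v, f v) < 1 / ((n : ℝ) + 1) := by
    intro n
    cases n with
    | zero =>
      rw [hq0]
      simpa using hEsmall [] (LegalPos.nil _)
    | succ n =>
      intro u hu v hv
      rw [hq] at hu hv
      refine (hEsmall _ ((hleg n).snoc (ha n)) u hu v hv).trans_le ?_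
      apply Nat.one_div_le_one_div
      have := hlen n
      simp only [List.length_append, List.length_singleton]
      omega
  obtain ⟨x, hx, hxq⟩ := exists_run q hleg
    (fun n => (List.prefix_append _ _).trans (hpre' n)) hlen
  -- The head of the `n`-th block sits in the run at index `(q n).length ≥ n`.
  have hxa : ∀ n, x (q n).length = a n := by
    intro n
    have h1 : (q n).length < (q n ++ [a n]).length := by simp
    rw [← hxq (n + 1) _ (h1.trans_le (hpre' n).length_le), ← (hpre' n).getElem h1]
    simp
  obtain ⟨y, h1, h2⟩ := hwin x hx
  refine ⟨y, fun ε hε => ?_⟩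
  obtain ⟨N, hN⟩ := Metric.tendsto_atTop.1 (h1.prodMk_nhds h2) (ε / 2) (by positivity)
  obtain ⟨M, hM⟩ := exists_nat_one_div_lt (half_pos hε)
  refine ⟨max N M, fun n hn z hz => ?_⟩
  have hNn : N ≤ n := (le_max_left _ _).trans hn
  have hMn : M ≤ n := (le_max_right _ _).trans hn
  have e1 := hN (q n).length (hNn.trans (hlen n))
  rw [hxa] at e1
  have e2 := hsmall n z (hb n z hz) (a n) (ha n)
  have e3 : 1 / ((n : ℝ) + 1) ≤ 1 / ((M : ℝ) + 1) := Nat.one_div_le_one_div hMn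
  have e4 := dist_triangle (z, f z) (a n, f (a n)) (y, f y)
  have e5 : dist (z, f z) (y, f y) < ε := by linarith
  simpa [Prod.dist_eq] using e5
end

section
/- Let (X,d) be a metric space, Σ a nonempty family of nonempty subsets of X, and f : X → ℝ. Then the games G_1(Σ,f) and G_{<ω}(Σ,f) are equivalent: Player I has a winning strategy in G_1(Σ,f) if and only if Player I has a winning strategy in G_{<ω}(Σ,f), and Player II has a winning strategy in G_1(Σ,f) if and only if Player II has a winning strategy in G_{<ω}(Σ,f). -/
/-!
The two games differ only in that Player I may play several points at once. The bridge is a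
*farthest-point selection*: from a run of nonempty blocks `b 0, b 1, …` pick successively
`x n ∈ b n` as a point of `b n` farthest from `x (n - 1)`, where distances are measured
between points `(x, f x)` of the graph of `f` in `X × ℝ`. If the selected sequence converges
(together with its `f`-values), then every point `z ∈ b n` satisfies
`dist z y ≤ dist (x n) (x (n - 1)) + dist (x (n - 1)) y`, so the whole blocks converge; the
converse is trivial. Thus Player II wins the run of blocks iff she wins the run of selected
points (`blocksWin_iff`).

The selection depends only on the past, so it can be made during a play: Player I turns a
strategy for blocks into one for points by playing the selected point of each block, and
Player II answers blocks by feeding the selected points to her strategy for points. In the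
remaining two directions points are regarded as one-element blocks.
-/

open Filter Topology

/-- A point of the block `b` farthest from `p` in the graph metric of `f`
(the sup metric on `X × ℝ`); the junk value for `b = []` is `p`. -/
noncomputable def farthest {X : Type*} [MetricSpace X] (f : X → ℝ) (p : X) (b : List X) : X :=
  (b.argmax fun x => dist (x, f x) (p, f p)).getD p

lemma farthest_spec {X : Type*} [MetricSpace X] (f : X → ℝ) (p : X) {b : List X}
    (hb : b ≠ []) :
    farthest f p b ∈ b ∧ ∀ x ∈ b,
      dist (x, f x) (p, f p) ≤ dist (farthest f p b, f (farthest f p b)) (p, f p) := by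
  unfold farthest
  cases h : b.argmax fun x => dist (x, f x) (p, f p) with
  | none => exact absurd (List.argmax_eq_none.1 h) hb
  | some m =>
    exact ⟨List.argmax_mem h, fun x hx => List.le_of_mem_argmax hx h⟩

/-- The last point of the farthest-point selection along a finite list of blocks,
started from the base point `p`. -/
noncomputable def selectLast {X : Type*} [MetricSpace X] (f : X → ℝ) (p : X)
    (h : List (List X)) : X :=
  h.foldl (farthest f) p

lemma selectLast_ofFn_succ {X : Type*} [MetricSpace X] (f : X → ℝ) (p : X)
    (b : ℕ → List X) (n : ℕ) :
    selectLast f p (List.ofFn fun i : Fin (n + 1) => b i.1) =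
      farthest f (selectLast f p (List.ofFn fun i : Fin n => b i.1)) (b n) := by
  simp [selectLast, List.ofFn_succ_last, -List.ofFn_succ]

lemma selectLast_mem {X : Type*} [MetricSpace X] (f : X → ℝ) (p : X)
    (b : ℕ → List X) (n : ℕ) (hb : b n ≠ []) :
    selectLast f p (List.ofFn fun i : Fin (n + 1) => b i.1) ∈ b n := by
  rw [selectLast_ofFn_succ]
  exact (farthest_spec f _ hb).1

/-- A run of nonempty blocks is won by Player II iff its farthest-point selection is. -/
lemma blocksWin_iff {X : Type*} [MetricSpace X] (f : X → ℝ) (p : X)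
    (b : ℕ → List X) (hb : ∀ n, b n ≠ []) :
    BlocksWin f b ↔ ∃ y : X,
      Tendsto (fun n => selectLast f p (List.ofFn fun i : Fin (n + 1) => b i.1))
        atTop (nhds y) ∧
      Tendsto (fun n => f (selectLast f p (List.ofFn fun i : Fin (n + 1) => b i.1)))
        atTop (nhds (f y)) := by
  refine exists_congr fun y => ⟨fun h => ?_, fun ⟨h₁, h₂⟩ ε hε => ?_⟩
  · simp only [Metric.tendsto_atTop]
    constructor
    all_goals
      intro ε hε
      obtain ⟨N, hN⟩ := h ε hε
      refine ⟨N, fun n hn => ?_⟩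
      have := hN n hn _ (selectLast_mem f p b n (hb n))
      tauto
  · have h := h₁.prodMk_nhds h₂
    obtain ⟨N, hN⟩ := Metric.tendsto_atTop.1 h (ε / 3) (by positivity)
    -- Beyond stage `N + 1` both the selected point and its predecessor are `ε / 3`-close to `y`.
    refine ⟨N + 1, fun n hn z hz => ?_⟩
    obtain ⟨m, rfl⟩ : ∃ m, n = m + 1 := ⟨n - 1, by omega⟩
    have hm := hN m (by omega)
    have hm' := hN (m + 1) (by omega)
    rw [selectLast_ofFn_succ] at hm'
    set q := selectLast f p (List.ofFn fun i : Fin (m + 1) => b i.1)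
    have hfar := (farthest_spec f q (hb (m + 1))).2 z hz
    have t₁ := dist_triangle (z, f z) (q, f q) (y, f y)
    have t₂ := dist_triangle_right (farthest f q (b (m + 1)), f (farthest f q (b (m + 1))))
      (q, f q) (y, f y)
    have : dist (z, f z) (y, f y) < ε := by linarith
    simpa [Prod.dist_eq] using this

lemma selectLast_singletons {X : Type*} [MetricSpace X] (f : X → ℝ) (p : X)
    (x : ℕ → X) (n : ℕ) :
    selectLast f p (List.ofFn fun i : Fin (n + 1) => [x i.1]) = x n := by
  simpa using selectLast_mem f p (fun i => [x i]) n (by simp)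

lemma blocksWin_singletons_iff {X : Type*} [MetricSpace X] (f : X → ℝ) (x : ℕ → X) :
    BlocksWin f (fun n => [x n]) ↔ ∃ y : X, Tendsto x atTop (nhds y) ∧
      Tendsto (fun n => f (x n)) atTop (nhds (f y)) := by
  rw [blocksWin_iff f (x 0) _ (by simp)]
  simp only [selectLast_singletons f (x 0) x]

/-- The list of values of `φ` at the nonempty initial segments of `L`: the moves prescribed by
a strategy `φ` against the successive moves `L` of the opponent. -/
def mapPrefixes {α β : Type*} (φ : List α → β) (L : List α) : List β :=
  List.ofFn fun i : Fin L.length => φ (L.take (i.1 + 1))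

lemma mapPrefixes_ofFn {α β : Type*} (φ : List α → β) (Q : ℕ → α) (n : ℕ) :
    mapPrefixes φ (List.ofFn fun i : Fin n => Q i.1) =
      List.ofFn fun i : Fin n => φ (List.ofFn fun j : Fin (i.1 + 1) => Q j.1) := by
  refine List.ext_getElem (by simp [mapPrefixes]) fun i h₁ h₂ => ?_
  simp only [mapPrefixes, List.getElem_ofFn]
  congr 1
  refine List.ext_getElem ?_ fun j _ _ => by simp [-List.ofFn_succ]
  simp only [List.length_ofFn] at h₂
  simp
  omega

/-- The games `G₁(Σ, f)` and `G_{<ω}(Σ, f)` are equivalent: Player I has a winning strategy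
in one iff he has one in the other, and likewise for Player II. -/
theorem G1_equiv_Gfin {X : Type*} [MetricSpace X] (S : Set (Set X))
    (hS : S.Nonempty) (hSne : ∀ P ∈ S, P.Nonempty) (f : X → ℝ) :
    (G1WinI S f ↔ GfinWinI S f) ∧ (G1WinII S f ↔ GfinWinII S f) := by
  obtain ⟨P₀, hP₀⟩ := hS
  obtain ⟨p, -⟩ := hSne P₀ hP₀
  refine ⟨⟨?_, ?_⟩, ⟨?_, ?_⟩⟩
  · rintro ⟨P, hP, τ, hτ⟩
    refine ⟨P, hP, fun L => [τ L], fun Q hQ => ⟨fun n => ?_, ?_⟩⟩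
    · simpa using (hτ Q hQ).1 n
    · rw [blocksWin_singletons_iff]
      exact (hτ Q hQ).2
  · rintro ⟨P, hP, τ, hτ⟩
    refine ⟨P, hP, fun L => selectLast f p (mapPrefixes τ L), fun Q hQ => ?_⟩
    obtain ⟨hleg, hwin⟩ := hτ Q hQ
    simp only [mapPrefixes_ofFn]
    exact ⟨fun n => (hleg n).2 _ (selectLast_mem f p
        (fun n => τ (List.ofFn fun i : Fin (n + 1) => Q i.1)) n (hleg n).1),
      fun h => hwin ((blocksWin_iff f p _ fun n => (hleg n).1).2 h)⟩
  · rintro ⟨σ, hσ⟩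
    refine ⟨fun P h => σ P (mapPrefixes (selectLast f p) h), fun P hP =>
      ⟨fun h => (hσ P hP).1 _, fun b hb => ?_⟩⟩
    simp only [mapPrefixes_ofFn] at hb
    rw [blocksWin_iff f p b fun n => (hb n).1]
    exact (hσ P hP).2 (fun n => selectLast f p (List.ofFn fun i : Fin (n + 1) => b i.1))
      fun n => (hb n).2 _ (selectLast_mem f p b n (hb n).1)
  · rintro ⟨σ, hσ⟩
    refine ⟨fun P h => σ P (h.map fun x => [x]), fun P hP =>
      ⟨fun h => (hσ P hP).1 _, fun x hx => ?_⟩⟩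
    rw [← blocksWin_singletons_iff]
    refine (hσ P hP).2 _ fun n => ⟨by simp, ?_⟩
    simpa [List.map_ofFn, Function.comp_def] using hx n
end

section
/- Let (X,d) be a complete metric space, Σ a dense family whose members are nonempty closed subsets of X, and f : X → ℝ. If f has the hereditary small oscillation property (HSOP) with respect to Σ, then Player II has a winning strategy in the game G_1(Σ,f). -/
/-!
Player II can ignore the points played by Player I. A set of small oscillation contains, by
density, a member of the family on which both the metric and `f` have small diameter
(`exists_small_subset`). Iterating this from the initial set `P` gives a decreasing sequence
`P₀ ⊇ P₁ ⊇ ⋯` in the family such that distances in `Pₙ` and in `f(Pₙ)` are at most `1 / (n + 1)`;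
Player II plays `Pₙ` at stage `n`. If `xₙ ∈ Pₙ` for all `n`, then `(xₙ)` is Cauchy, its limit `y`
lies in every (closed) `Pₙ`, and so `|f xₙ - f y| ≤ 1 / (n + 1)`.
-/

open Filter Topology

/-- The oscillation of `f` restricted to `Q` at a point `x`:
`osc f Q x = lim_{ε → 0⁺} diam (f '' (Q ∩ B(x, ε)))`, expressed as the infimum over
`ε > 0` of the (extended) diameters, which coincides with the limit by monotonicity. -/
noncomputable def osc {X : Type*} [MetricSpace X] (f : X → ℝ) (Q : Set X) (x : X) :
    ENNReal :=
  ⨅ (ε : ℝ) (_ : 0 < ε), EMetric.diam (f '' (Q ∩ Metric.ball x ε))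

/-- `f` has the hereditary small oscillation property (HSOP) with respect to the family `S`:
for every `α > 0` and every `P ∈ S` there is `Q ∈ S` with `Q ⊆ P` such that the oscillation
of `f ↾ Q` at every point of `Q` is smaller than `α`. -/
def HSOP {X : Type*} [MetricSpace X] (f : X → ℝ) (S : Set (Set X)) : Prop :=
  ∀ α : ℝ, 0 < α → ∀ P ∈ S, ∃ Q ∈ S, Q ⊆ P ∧ ∀ x ∈ Q, osc f Q x < ENNReal.ofReal α

/-- A family `S` of subsets of a metric space is dense if for each `P ∈ S`, every `x ∈ P`
and every `r > 0` there exists `Q ∈ S` with `Q ⊆ P ∩ B(x, r)`. -/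
def DenseFamily {X : Type*} [MetricSpace X] (S : Set (Set X)) : Prop :=
  ∀ P ∈ S, ∀ x ∈ P, ∀ r : ℝ, 0 < r → ∃ Q ∈ S, Q ⊆ P ∩ Metric.ball x r

theorem exists_small_subset {X : Type*} [MetricSpace X] {S : Set (Set X)}
    (hne : ∀ P ∈ S, P.Nonempty) (hd : DenseFamily S) {f : X → ℝ} (h : HSOP f S)
    {P : Set X} (hP : P ∈ S) {α : ℝ} (hα : 0 < α) :
    ∃ Q ∈ S, Q ⊆ P ∧ ∀ a ∈ Q, ∀ b ∈ Q, dist a b ≤ α ∧ dist (f a) (f b) ≤ α := by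
  obtain ⟨Q, hQ, hQP, hosc⟩ := h α hα P hP
  obtain ⟨x, hx⟩ := hne Q hQ
  have hox := hosc x hx
  simp only [osc, iInf_lt_iff] at hox
  obtain ⟨ε, hε, hdiam⟩ := hox
  obtain ⟨R, hR, hRQ⟩ := hd Q hQ x hx (min ε (α / 2)) (by positivity)
  refine ⟨R, hR, fun a ha => hQP (hRQ ha).1, fun a ha b hb => ⟨?_, ?_⟩⟩
  · have h1 := (Metric.mem_ball.1 (hRQ ha).2).trans_le (min_le_right _ _)
    have h2 := (Metric.mem_ball.1 (hRQ hb).2).trans_le (min_le_right _ _)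
    linarith [dist_triangle_right a b x]
  · have hmem : ∀ c ∈ R, f c ∈ f '' (Q ∩ Metric.ball x ε) := fun c hc =>
      ⟨c, ⟨(hRQ hc).1, Metric.ball_subset_ball (min_le_left _ _) (hRQ hc).2⟩, rfl⟩
    have hle := (Metric.edist_le_ediam_of_mem (hmem a ha) (hmem b hb)).trans hdiam.le
    rwa [edist_dist, ENNReal.ofReal_le_ofReal_iff hα.le] at hle

/-- If `X` is a complete metric space, `S` is a dense family of nonempty closed subsets of
`X` and `f` has the HSOP with respect to `S`, then Player II has a winning strategy in the
game `G₁(S, f)`. -/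
theorem playerII_of_HSOP {X : Type*} [MetricSpace X] [CompleteSpace X] (S : Set (Set X))
    (hcl : ∀ P ∈ S, IsClosed P) (hne : ∀ P ∈ S, P.Nonempty) (hd : DenseFamily S)
    (f : X → ℝ) (h : HSOP f S) : G1WinII S f := by
  have step : ∀ (P : Set X) (n : ℕ), ∃ Q : Set X, P ∈ S → Q ∈ S ∧ Q ⊆ P ∧
      ∀ a ∈ Q, ∀ b ∈ Q, dist a b ≤ 1 / ((n : ℝ) + 1) ∧ dist (f a) (f b) ≤ 1 / ((n : ℝ) + 1) := by
    intro P n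
    by_cases hP : P ∈ S
    · obtain ⟨Q, hQ, hQ'⟩ := exists_small_subset hne hd h hP (α := 1 / ((n : ℝ) + 1))
        (by positivity)
      exact ⟨Q, fun _ => ⟨hQ, hQ'⟩⟩
    · exact ⟨P, fun hP' => absurd hP' hP⟩
  choose g hg using step
  let s : Set X → ℕ → Set X := fun P n => Nat.rec (g P 0) (fun n Q => g Q (n + 1)) n
  refine ⟨fun P l => s P l.length, fun P hP => ?_⟩
  have hs : ∀ n, s P n ∈ S := by
    intro n
    induction n with
    | zero => exact (hg P 0 hP).1
    | succ n ih => exact (hg (s P n) (n + 1) ih).1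
  have hanti : Antitone (s P) :=
    antitone_nat_of_succ_le fun n => (hg (s P n) (n + 1) (hs n)).2.1
  have hsmall : ∀ n, ∀ a ∈ s P n, ∀ b ∈ s P n,
      dist a b ≤ 1 / ((n : ℝ) + 1) ∧ dist (f a) (f b) ≤ 1 / ((n : ℝ) + 1) := by
    intro n
    cases n with
    | zero => exact (hg P 0 hP).2.2
    | succ n => exact (hg (s P n) (n + 1) (hs n)).2.2
  refine ⟨fun l => ⟨hs _, (hanti (Nat.zero_le _)).trans (hg P 0 hP).2.1⟩, fun x hx => ?_⟩
  simp only [List.length_ofFn] at hx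
  have hlim : Tendsto (fun n : ℕ => 1 / ((n : ℝ) + 1)) atTop (𝓝 0) :=
    tendsto_one_div_add_atTop_nhds_zero_nat
  have hcauchy : CauchySeq x := cauchySeq_of_le_tendsto_0' _
    (fun n m hnm => (hsmall n _ (hx n) _ (hanti hnm (hx m))).1) hlim
  obtain ⟨y, hy⟩ := cauchySeq_tendsto_of_complete hcauchy
  have hyn : ∀ n, y ∈ s P n := fun n =>
    (hcl _ (hs n)).mem_of_tendsto hy
      ((eventually_ge_atTop n).mono fun m hm => hanti hm (hx m))
  refine ⟨y, hy, tendsto_iff_dist_tendsto_zero.2 ?_⟩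
  exact squeeze_zero (fun _ => dist_nonneg) (fun n => (hsmall n _ (hx n) _ (hyn n)).2) hlim
end

section
/- Let (X,d) be a metric space, Σ a nonempty family of nonempty subsets of X, and f : X → ℝ. If f does not have the hereditary small oscillation property (HSOP) with respect to Σ, then Player I has a winning strategy in the game G_1(Σ,f). -/
/-!
If HSOP fails, there are `α > 0` and `P ∈ S` such that every `Q ∈ S` with `Q ⊆ P` has a point of
oscillation at least `α`; in particular `f '' Q` has diameter at least `α`. Player I opens with
`P`. Since no real number can be within `α / 4` of all values of `f` on such a `Q`
(`exists_far_value`), Player I can always answer with a point of `Q` whose `f`-value is at distance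
at least `α / 4` from the `f`-value of the previous point. The values `f (x n)` then do not form a
Cauchy sequence, so they do not converge at all.
-/

open Filter Topology

/-- A set on which `f` has a point of oscillation at least `α` contains points whose values are
far from any prescribed real number. -/
lemma exists_far_value {X : Type*} [MetricSpace X] {f : X → ℝ} {Q : Set X} {x : X} {α : ℝ}
    (hα : 0 < α) (hosc : ENNReal.ofReal α ≤ osc f Q x) (r : ℝ) :
    ∃ y ∈ Q, α / 4 ≤ |f y - r| := by
  by_contra! hcon
  -- Otherwise all values lie within `α / 4` of `r`, so the diameter of `f '' Q` is at most `α / 2`.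
  have hdiam : osc f Q x ≤ ENNReal.ofReal (α / 2) := by
    refine (iInf₂_le (1 : ℝ) one_pos).trans (Metric.ediam_le ?_)
    rintro _ ⟨u, ⟨hu, -⟩, rfl⟩ _ ⟨v, ⟨hv, -⟩, rfl⟩
    rw [edist_dist, Real.dist_eq]
    refine ENNReal.ofReal_le_ofReal (abs_le.2 ?_)
    have h₁ := abs_lt.1 (hcon u hu)
    have h₂ := abs_lt.1 (hcon v hv)
    constructor <;> linarith [h₁.1, h₁.2, h₂.1, h₂.2]
  have hle := (ENNReal.ofReal_le_ofReal_iff (by positivity)).1 (hosc.trans hdiam)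
  linarith

/-- If `f` does not have the HSOP with respect to `S`, then Player I has a winning strategy
in the game `G₁(S, f)`. -/
theorem playerI_of_not_HSOP {X : Type*} [MetricSpace X] (S : Set (Set X))
    (hS : S.Nonempty) (hSne : ∀ P ∈ S, P.Nonempty) (f : X → ℝ)
    (h : ¬ HSOP f S) : G1WinI S f := by
  unfold HSOP at h
  push Not at h
  obtain ⟨α, hα, P, hP, hbad⟩ := h
  obtain ⟨x₀, -⟩ := hSne P hP
  have hstep : ∀ (x : X) (Q : Set X), ∃ y : X,
      Q ∈ S → Q ⊆ P → y ∈ Q ∧ α / 4 ≤ |f y - f x| := by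
    intro x Q
    by_cases hQ : Q ∈ S ∧ Q ⊆ P
    · obtain ⟨z, -, hz⟩ := hbad Q hQ.1 hQ.2
      obtain ⟨y, hy⟩ := exists_far_value hα hz (f x)
      exact ⟨y, fun _ _ => hy⟩
    · exact ⟨x, fun h₁ h₂ => absurd ⟨h₁, h₂⟩ hQ⟩
  choose g hg using hstep
  -- The strategy remembers only its previous point and moves by `g`, starting from a dummy `x₀`.
  refine ⟨P, hP, fun l => l.foldl g x₀, fun Q hQ => ?_⟩
  have hrec : ∀ n : ℕ, (List.ofFn fun i : Fin (n + 1) => Q i.1).foldl g x₀ =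
      g ((List.ofFn fun i : Fin n => Q i.1).foldl g x₀) (Q n) := by
    intro n
    rw [List.ofFn_succ', List.concat_eq_append, List.foldl_append]
    simp
  refine ⟨fun n => ?_, ?_⟩
  · simp only [hrec n]
    exact (hg _ _ (hQ n).1 (hQ n).2).1
  · rintro ⟨y, -, hy⟩
    obtain ⟨N, hN⟩ := Metric.cauchySeq_iff'.1 hy.cauchySeq (α / 8) (by positivity)
    have hclose := hN (N + 1) (Nat.le_succ N)
    have hfar := (hg ((List.ofFn fun i : Fin (N + 1) => Q i.1).foldl g x₀) (Q (N + 1))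
      (hQ (N + 1)).1 (hQ (N + 1)).2).2
    rw [← hrec (N + 1)] at hfar
    rw [Real.dist_eq] at hclose
    linarith
end

section
/- Let (X,d) be a complete metric space, Σ a dense family whose members are nonempty closed subsets of X, and f : X → ℝ. Then: f has the HSOP with respect to Σ if and only if Player II has a winning strategy in the game G_1(Σ,f); f does not have the HSOP with respect to Σ if and only if Player I has a winning strategy in G_1(Σ,f). In particular, the game G_1(Σ,f) is determined: exactly one of the two players has a winning strategy. -/
/-!
Call a set `α`-small if its points, as well as their `f`-values, are at mutual distance less
than `α`. Under the HSOP and density, every member of `S` contains an `α`-small member of `S`: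
restrict to a member of small oscillation and then to a small ball around one of its points
(`exists_small_member`). Iterating with `α = 1 / (n + 1)` gives a decreasing sequence of closed
sets, and Player II wins by playing it regardless of Player I's moves: the chosen points are
Cauchy, their limit lies in all the sets, hence the values converge too
(`HSOP.g1WinII`).

If the HSOP fails, there are `α > 0` and `P ∈ S` such that `f` takes on every member `Q ⊆ P` of
`S` two values at distance at least `α / 2`. One of them is at distance at least `α / 4` from
the `f`-value of the previous point, so Player I can make the sequence of `f`-values non-Cauchy
(`g1WinI_of_not_HSOP`).

Playing two winning strategies against each other shows that the players cannot both have one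
(`not_g1WinI_and_g1WinII`), and the theorem follows by propositional logic.
-/

open Filter Topology

lemma ofFn_val_succ {β : Type*} (u : ℕ → β) (n : ℕ) :
    (List.ofFn fun i : Fin (n + 1) => u i.1) = (List.ofFn fun i : Fin n => u i.1) ++ [u n] := by
  rw [List.ofFn_succ', List.concat_eq_append]
  rfl

/-- Under the HSOP, every member of a dense family contains a member on which both the points
and the values of `f` vary by less than `α`. -/
lemma exists_small_member {X : Type*} [MetricSpace X] {S : Set (Set X)} {f : X → ℝ}
    (hne : ∀ P ∈ S, P.Nonempty) (hd : DenseFamily S) (h : HSOP f S) {α : ℝ} (hα : 0 < α)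
    {P : Set X} (hP : P ∈ S) :
    ∃ Q ∈ S, Q ⊆ P ∧ ∀ x ∈ Q, ∀ y ∈ Q, dist x y < α ∧ dist (f x) (f y) < α := by
  obtain ⟨R, hR, hRP, hosc⟩ := h α hα P hP
  obtain ⟨z, hz⟩ := hne R hR
  have hz' := hosc z hz
  simp only [osc, iInf_lt_iff] at hz'
  obtain ⟨ε, hε, hdiam⟩ := hz'
  obtain ⟨Q, hQ, hQR⟩ := hd R hR z hz (min ε (α / 2)) (by positivity)
  refine ⟨Q, hQ, fun x hx => hRP (hQR hx).1, fun x hx y hy => ⟨?_, ?_⟩⟩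
  · have h1 := (Metric.mem_ball.1 (hQR hx).2).trans_le (min_le_right _ _)
    have h2 := (Metric.mem_ball.1 (hQR hy).2).trans_le (min_le_right _ _)
    have h3 := dist_triangle_right x y z
    linarith
  · have hmem : ∀ w ∈ Q, f w ∈ f '' (R ∩ Metric.ball z ε) := fun w hw =>
      ⟨w, ⟨(hQR hw).1, Metric.ball_subset_ball (min_le_left _ _) (hQR hw).2⟩, rfl⟩
    have hlt := (Metric.edist_le_ediam_of_mem (hmem x hx) (hmem y hy)).trans_lt hdiam
    rw [edist_dist] at hlt
    exact (ENNReal.ofReal_lt_ofReal_iff hα).1 hlt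

/-- Player II's winning strategy is a fixed decreasing sequence of smaller and smaller members
of the family, which depends on Player I's initial set only. -/
lemma HSOP.g1WinII {X : Type*} [MetricSpace X] [CompleteSpace X] {S : Set (Set X)} {f : X → ℝ}
    (hcl : ∀ P ∈ S, IsClosed P) (hne : ∀ P ∈ S, P.Nonempty) (hd : DenseFamily S)
    (h : HSOP f S) : G1WinII S f := by
  have hex : ∀ (n : ℕ) (P : Set X), ∃ Q, P ∈ S → Q ∈ S ∧ Q ⊆ P ∧
      ∀ x ∈ Q, ∀ y ∈ Q, dist x y < 1 / ((n : ℝ) + 1) ∧ dist (f x) (f y) < 1 / ((n : ℝ) + 1) := by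
    intro n P
    by_cases hP : P ∈ S
    · obtain ⟨Q, hQ⟩ := exists_small_member hne hd h (Nat.one_div_pos_of_nat (n := n)) hP
      exact ⟨Q, fun _ => hQ⟩
    · exact ⟨P, fun hP' => absurd hP' hP⟩
  choose next hnext using hex
  let q : Set X → ℕ → Set X := fun P n => Nat.rec (next 0 P) (fun k Q => next (k + 1) Q) n
  refine ⟨fun P l => q P l.length, fun P hP => ?_⟩
  have hS : ∀ n, q P n ∈ S := by
    intro n
    induction n with
    | zero => exact (hnext 0 P hP).1
    | succ k ih => exact (hnext (k + 1) _ ih).1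
  have hanti : Antitone (q P) := antitone_nat_of_succ_le fun n => (hnext (n + 1) _ (hS n)).2.1
  have hsmall : ∀ n, ∀ x ∈ q P n, ∀ y ∈ q P n,
      dist x y < 1 / ((n : ℝ) + 1) ∧ dist (f x) (f y) < 1 / ((n : ℝ) + 1) := by
    intro n
    cases n with
    | zero => exact (hnext 0 P hP).2.2
    | succ k => exact (hnext (k + 1) _ (hS k)).2.2
  refine ⟨fun l => ⟨hS _, (hanti (Nat.zero_le _)).trans (hnext 0 P hP).2.1⟩, fun x hx => ?_⟩
  simp only [List.length_ofFn] at hx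
  have hmem : ∀ {n m}, n ≤ m → x m ∈ q P n := fun hnm => hanti hnm (hx _)
  have hlim := tendsto_one_div_add_atTop_nhds_zero_nat (𝕜 := ℝ)
  have hc : CauchySeq x := cauchySeq_of_le_tendsto_0 (fun n : ℕ => 1 / ((n : ℝ) + 1))
    (fun n m N hn hm => (hsmall N _ (hmem hn) _ (hmem hm)).1.le) hlim
  obtain ⟨y, hy⟩ := cauchySeq_tendsto_of_complete hc
  have hyq : ∀ n, y ∈ q P n := fun n => (hcl _ (hS n)).mem_of_tendsto hy
    (eventually_atTop.2 ⟨n, fun _ hm => hmem hm⟩)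
  refine ⟨y, hy, tendsto_iff_dist_tendsto_zero.2 ?_⟩
  exact squeeze_zero (fun _ => dist_nonneg) (fun n => (hsmall n _ (hx n) _ (hyq n)).2.le) hlim

/-- Player I's winning strategy makes consecutive values of `f` differ by a fixed amount. -/
lemma g1WinI_of_not_HSOP {X : Type*} [MetricSpace X] {S : Set (Set X)} {f : X → ℝ}
    (hne : ∀ P ∈ S, P.Nonempty) (h : ¬ HSOP f S) : G1WinI S f := by
  simp only [HSOP, not_forall, not_exists, not_and] at h
  obtain ⟨α, hα, P, hP, hosc⟩ := h
  have key : ∀ Q ∈ S, Q ⊆ P → ∀ x : X, ∃ y ∈ Q, α / 4 ≤ dist (f y) (f x) := by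
    intro Q hQ hQP x
    by_contra! hcon
    obtain ⟨z, hz, hbig⟩ := hosc Q hQ hQP
    refine hbig ?_
    have hle : osc f Q z ≤ EMetric.diam (f '' (Q ∩ Metric.ball z 1)) :=
      iInf₂_le (1 : ℝ) one_pos
    have hdiam : EMetric.diam (f '' (Q ∩ Metric.ball z 1)) ≤ ENNReal.ofReal (α / 2) := by
      refine Metric.ediam_le ?_
      rintro _ ⟨a, ha, rfl⟩ _ ⟨b, hb, rfl⟩
      rw [edist_dist]
      refine ENNReal.ofReal_le_ofReal ?_
      have h1 := hcon a ha.1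
      have h2 := hcon b hb.1
      have h3 := dist_triangle_right (f a) (f b) (f x)
      linarith
    exact (hle.trans hdiam).trans_lt ((ENNReal.ofReal_lt_ofReal_iff hα).2 (by linarith))
  have hex : ∀ (x : X) (Q : Set X), ∃ y, Q ∈ S → Q ⊆ P → y ∈ Q ∧ α / 4 ≤ dist (f y) (f x) := by
    intro x Q
    by_cases hQ : Q ∈ S ∧ Q ⊆ P
    · obtain ⟨y, hy⟩ := key Q hQ.1 hQ.2 x
      exact ⟨y, fun _ _ => hy⟩
    · exact ⟨x, fun h1 h2 => absurd ⟨h1, h2⟩ hQ⟩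
  choose step hstep using hex
  obtain ⟨x₀, -⟩ := hne P hP
  refine ⟨P, hP, fun l => l.foldl step x₀, fun Q hQ => ?_⟩
  have hsucc : ∀ n : ℕ, (List.ofFn fun i : Fin (n + 1) => Q i.1).foldl step x₀ =
      step ((List.ofFn fun i : Fin n => Q i.1).foldl step x₀) (Q n) := by
    intro n
    rw [ofFn_val_succ, List.foldl_append]
    rfl
  refine ⟨fun n => ?_, ?_⟩
  · beta_reduce
    rw [hsucc]
    exact (hstep _ _ (hQ n).1 (hQ n).2).1
  · rintro ⟨y, -, hy⟩
    obtain ⟨N, hN⟩ := Metric.cauchySeq_iff.1 hy.cauchySeq (α / 4) (by positivity)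
    have hlt := hN (N + 1) (Nat.le_succ N) N le_rfl
    have hge := (hstep ((List.ofFn fun i : Fin (N + 1) => Q i.1).foldl step x₀) (Q (N + 1))
      (hQ _).1 (hQ _).2).2
    rw [← hsucc (N + 1)] at hge
    exact absurd hlt (not_lt.2 hge)

/-- Two winning strategies cannot coexist: consider the run in which both are followed. -/
lemma not_g1WinI_and_g1WinII {X : Type*} [MetricSpace X] {S : Set (Set X)} {f : X → ℝ} :
    ¬ (G1WinI S f ∧ G1WinII S f) := by
  rintro ⟨⟨P, hP, τ, hτ⟩, σ, hσ⟩
  obtain ⟨hlegal, hwin⟩ := hσ P hP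
  -- The pair of histories (points of Player I, sets of Player II) after `n` rounds.
  let s : ℕ → List X × List (Set X) := fun n => Nat.rec ([], [])
    (fun _ p => (p.1 ++ [τ (p.2 ++ [σ P p.1])], p.2 ++ [σ P p.1])) n
  let Q : ℕ → Set X := fun n => σ P (s n).1
  let x : ℕ → X := fun n => τ ((s n).2 ++ [Q n])
  have hs : ∀ n : ℕ, s n = (List.ofFn fun i : Fin n => x i.1, List.ofFn fun i : Fin n => Q i.1) := by
    intro n
    induction n with
    | zero => simp [s]
    | succ k ih =>
      have hk : s (k + 1) = ((s k).1 ++ [x k], (s k).2 ++ [Q k]) := rfl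
      rw [hk, ih, ofFn_val_succ, ofFn_val_succ]
  have hx : ∀ n : ℕ, τ (List.ofFn fun i : Fin (n + 1) => Q i.1) = x n := by
    intro n
    have h2 := congrArg Prod.snd (hs (n + 1))
    exact congrArg τ h2.symm
  have hQ : ∀ n : ℕ, σ P (List.ofFn fun i : Fin n => x i.1) = Q n := by
    intro n
    exact congrArg (σ P) (congrArg Prod.fst (hs n)).symm
  obtain ⟨hmem, hno⟩ := hτ Q fun n => hlegal _
  simp only [hx] at hmem hno
  exact hno (hwin x fun n => by rw [hQ]; exact hmem n)

/-- For a complete metric space `X` and a dense family `S` of nonempty closed subsets of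
`X`: `f` has the HSOP with respect to `S` iff Player II has a winning strategy in
`G₁(S, f)`, `f` fails the HSOP iff Player I has a winning strategy, and the game is
determined: exactly one of the players has a winning strategy. -/
theorem HSOP_game_characterization {X : Type*} [MetricSpace X] [CompleteSpace X]
    (S : Set (Set X)) (hcl : ∀ P ∈ S, IsClosed P) (hne : ∀ P ∈ S, P.Nonempty)
    (hd : DenseFamily S) (f : X → ℝ) :
    (HSOP f S ↔ G1WinII S f) ∧ (¬ HSOP f S ↔ G1WinI S f) ∧
      Xor' (G1WinI S f) (G1WinII S f) := by
  have h1 : HSOP f S → G1WinII S f := fun h => h.g1WinII hcl hne hd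
  have h2 : ¬ HSOP f S → G1WinI S f := g1WinI_of_not_HSOP hne
  have h3 : ¬ (G1WinI S f ∧ G1WinII S f) := not_g1WinI_and_g1WinII
  unfold Xor'
  tauto
end

section
/- Let (X,d) be a complete metric space, Σ a dense family whose members are nonempty closed subsets of X, and f : X → ℝ. Assume that whenever f has the HSOP with respect to Σ, f also has the HCRP with respect to Σ. Then the following are equivalent: (i) f has the HCRP with respect to Σ; (ii) f has the HSOP with respect to Σ; (iii) Player II has a winning strategy in the game G_1(Σ,f); (iv) Player I does not have a winning strategy in the game G_1(Σ,f). -/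
/-!
The implications are (i) → (iii) → (iv) → (ii), and (ii) → (i) is the assumption `himp`.

(i) → (iii): Player II answers `P` by a set `Q ∈ S` on which `f` is continuous, and then answers
the `n`-th point `x n` by a member of `S` inside his previous set and the ball of radius `2⁻ⁿ`
about `x n`. The points of a run form a Cauchy sequence in the closed set `Q`, so they converge in
`Q`, and continuity of `f` on `Q` gives convergence of the values (`winII_of_HCRP`).

(iii) → (iv): two winning strategies played against each other give a contradiction
(`not_winI_of_winII`).

(iv) → (ii): if the HSOP fails for `α` and `P`, then `f` has diameter at least `α` on every
`Q ∈ S` with `Q ⊆ P`. Player I opens with `P` and always moves to a point whose value differs by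
more than `α / 4` from the value at his previous point, so the values do not converge
(`winI_of_not_HSOP`).
-/

open Filter Topology

/-- `f` has the hereditary continuous restriction property (HCRP) with respect to the
family `S`: for every `P ∈ S` there is `Q ∈ S` with `Q ⊆ P` such that the restriction
`f ↾ Q` is continuous. -/
def HCRP {X : Type*} [TopologicalSpace X] (f : X → ℝ) (S : Set (Set X)) : Prop :=
  ∀ P ∈ S, ∃ Q ∈ S, Q ⊆ P ∧ ContinuousOn f Q

/-- Player II's shrinking move: from his current set and the round number, and Player I's point
`x`, pass to a member of `S` inside the current set and the ball of radius `2⁻ⁿ` about `x`. If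
there is none (which only happens at illegal positions) the current set is kept. -/
noncomputable def shrinkStep {X : Type*} [MetricSpace X] (S : Set (Set X)) (s : Set X × ℕ)
    (x : X) : Set X × ℕ :=
  open Classical in
  (if h : ∃ Q ∈ S, Q ⊆ s.1 ∩ Metric.ball x ((1 / 2 : ℝ) ^ s.2) then h.choose else s.1, s.2 + 1)

theorem shrinkStep_mem {X : Type*} [MetricSpace X] {S : Set (Set X)} {s : Set X × ℕ}
    (hs : s.1 ∈ S) (x : X) : (shrinkStep S s x).1 ∈ S ∧ (shrinkStep S s x).1 ⊆ s.1 := by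
  unfold shrinkStep
  split_ifs with h
  · exact ⟨h.choose_spec.1, h.choose_spec.2.trans Set.inter_subset_left⟩
  · exact ⟨hs, subset_rfl⟩

theorem shrinkStep_ball {X : Type*} [MetricSpace X] {S : Set (Set X)} (hd : DenseFamily S)
    {s : Set X × ℕ} (hs : s.1 ∈ S) {x : X} (hx : x ∈ s.1) :
    (shrinkStep S s x).1 ⊆ Metric.ball x ((1 / 2 : ℝ) ^ s.2) := by
  have h := hd s.1 hs x hx ((1 / 2 : ℝ) ^ s.2) (by positivity)
  unfold shrinkStep
  rw [dif_pos h]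
  exact h.choose_spec.2.trans Set.inter_subset_right

theorem foldl_shrinkStep_mem {X : Type*} [MetricSpace X] {S : Set (Set X)} (h : List X)
    (s : Set X × ℕ) (hs : s.1 ∈ S) :
    (h.foldl (shrinkStep S) s).1 ∈ S ∧ (h.foldl (shrinkStep S) s).1 ⊆ s.1 := by
  induction h generalizing s with
  | nil => exact ⟨hs, subset_rfl⟩
  | cons a t ih =>
    have h1 := shrinkStep_mem hs a
    exact ⟨(ih _ h1.1).1, (ih _ h1.1).2.trans h1.2⟩

theorem foldl_shrinkStep_snd {X : Type*} [MetricSpace X] {S : Set (Set X)} (h : List X)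
    (s : Set X × ℕ) : (h.foldl (shrinkStep S) s).2 = s.2 + h.length := by
  induction h generalizing s with
  | nil => rfl
  | cons a t ih =>
    rw [List.foldl_cons, ih, List.length_cons]
    simp only [shrinkStep]
    omega

theorem ofFn_snoc {α : Type*} (x : ℕ → α) (n : ℕ) :
    (List.ofFn fun i : Fin (n + 1) => x i.1) = (List.ofFn fun i : Fin n => x i.1) ++ [x n] := by
  rw [List.ofFn_succ_last]
  simp

theorem winII_of_HCRP {X : Type*} [MetricSpace X] [CompleteSpace X]
    {S : Set (Set X)} (hcl : ∀ P ∈ S, IsClosed P) (hd : DenseFamily S) {f : X → ℝ}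
    (hf : HCRP f S) : G1WinII S f := by
  choose! Q hQS hQP hQc using hf
  refine ⟨fun P h => (h.foldl (shrinkStep S) (Q P, 0)).1, fun P hP => ⟨fun h => ?_, ?_⟩⟩
  · have := foldl_shrinkStep_mem h (Q P, 0) (hQS P hP)
    exact ⟨this.1, this.2.trans (hQP P hP)⟩
  · intro x hx
    beta_reduce at hx
    have hxQ : ∀ n, x n ∈ Q P := fun n => (foldl_shrinkStep_mem _ (Q P, 0) (hQS P hP)).2 (hx n)
    have hc : CauchySeq x := by
      refine cauchySeq_of_le_geometric (1 / 2) 1 (by norm_num) fun n => ?_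
      have h1 := hx (n + 1)
      rw [ofFn_snoc, List.foldl_append, List.foldl_cons, List.foldl_nil] at h1
      have h2 := shrinkStep_ball hd (foldl_shrinkStep_mem _ (Q P, 0) (hQS P hP)).1 (hx n) h1
      rw [foldl_shrinkStep_snd, Metric.mem_ball, dist_comm] at h2
      simp only [List.length_ofFn, zero_add] at h2
      linarith
    obtain ⟨y, hy⟩ := cauchySeq_tendsto_of_complete hc
    have hyQ : y ∈ Q P := (hcl _ (hQS P hP)).mem_of_tendsto hy (Eventually.of_forall hxQ)
    exact ⟨y, hy, (hQc P hP y hyQ).tendsto.comp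
      (tendsto_nhdsWithin_iff.2 ⟨hy, Eventually.of_forall hxQ⟩)⟩

/-- The lists of points and of sets played in the first `n` rounds when Player I follows `τ` and
Player II follows `σ`. -/
def duel {X : Type*} (σ : List X → Set X) (τ : List (Set X) → X) : ℕ → List X × List (Set X)
  | 0 => ([], [])
  | n + 1 =>
    ((duel σ τ n).1 ++ [τ ((duel σ τ n).2 ++ [σ (duel σ τ n).1])],
      (duel σ τ n).2 ++ [σ (duel σ τ n).1])

theorem not_winI_of_winII {X : Type*} [MetricSpace X] {S : Set (Set X)} {f : X → ℝ}
    (hII : G1WinII S f) : ¬ G1WinI S f := by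
  rintro ⟨P, hP, τ, hτ⟩
  obtain ⟨σ, hσ⟩ := hII
  obtain ⟨hleg, hwin⟩ := hσ P hP
  set Q : ℕ → Set X := fun n => σ P (duel (σ P) τ n).1 with hQ
  set x : ℕ → X := fun n => τ (duel (σ P) τ (n + 1)).2 with hx
  have h2 : ∀ n, (List.ofFn fun i : Fin n => Q i.1) = (duel (σ P) τ n).2 := by
    intro n
    induction n with
    | zero => simp [duel]
    | succ n ih => rw [ofFn_snoc, ih]; rfl
  have h1 : ∀ n, (List.ofFn fun i : Fin n => x i.1) = (duel (σ P) τ n).1 := by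
    intro n
    induction n with
    | zero => simp [duel]
    | succ n ih => rw [ofFn_snoc, ih]; rfl
  obtain ⟨hmem, hno⟩ := hτ Q fun n => hleg _
  simp only [h2] at hmem hno
  refine hno (hwin x fun n => ?_)
  rw [h1]
  exact hmem n

/-- Player I's escaping move: from the previous point `a` and Player II's set `Q`, a point of `Q`
whose `f`-value is more than `δ` away from `f a`, with junk value `a` if there is none. -/
noncomputable def escapeStep {X : Type*} (f : X → ℝ) (δ : ℝ) (a : X) (Q : Set X) : X :=
  open Classical in
  if h : ∃ z ∈ Q, δ < dist (f z) (f a) then h.choose else a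

theorem winI_of_not_HSOP {X : Type*} [MetricSpace X] {S : Set (Set X)}
    (hne : ∀ P ∈ S, P.Nonempty) {f : X → ℝ} (hf : ¬ HSOP f S) : G1WinI S f := by
  unfold HSOP at hf
  push Not at hf
  obtain ⟨α, hα, P, hP, H⟩ := hf
  have key : ∀ Q ∈ S, Q ⊆ P → ∀ a, ∃ z ∈ Q, α / 4 < dist (f z) (f a) := by
    intro Q hQ hQP a
    by_contra! hcon
    obtain ⟨x, -, hx⟩ := H Q hQ hQP
    have h1 : osc f Q x ≤ ENNReal.ofReal (α / 2) := by
      refine (iInf₂_le (1 : ℝ) one_pos).trans (Metric.ediam_le ?_)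
      rintro _ ⟨u, hu, rfl⟩ _ ⟨v, hv, rfl⟩
      rw [edist_dist]
      apply ENNReal.ofReal_le_ofReal
      have := dist_triangle_right (f u) (f v) (f a)
      linarith [hcon u hu.1, hcon v hv.1]
    have h2 := (ENNReal.ofReal_le_ofReal_iff (by positivity)).1 (hx.trans h1)
    linarith
  have step : ∀ Q ∈ S, Q ⊆ P → ∀ a, escapeStep f (α / 4) a Q ∈ Q ∧
      α / 4 < dist (f (escapeStep f (α / 4) a Q)) (f a) := by
    intro Q hQ hQP a
    have h := key Q hQ hQP a
    unfold escapeStep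
    rw [dif_pos h]
    exact h.choose_spec
  obtain ⟨p, -⟩ := hne P hP
  refine ⟨P, hP, fun l => l.foldl (escapeStep f (α / 4)) p, fun Q hQ => ⟨fun n => ?_, ?_⟩⟩
  · beta_reduce
    rw [ofFn_snoc, List.foldl_append]
    exact (step _ (hQ n).1 (hQ n).2 _).1
  · rintro ⟨y, -, hy⟩
    obtain ⟨N, hN⟩ := Metric.cauchySeq_iff.1 hy.cauchySeq (α / 4) (by positivity)
    have h1 := hN (N + 1) (by omega) N le_rfl
    beta_reduce at h1
    rw [ofFn_snoc Q (N + 1), List.foldl_append] at h1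
    exact absurd h1 (not_lt.2 (step _ (hQ (N + 1)).1 (hQ (N + 1)).2 _).2.le)

/-- For a complete metric space `X` and a dense family `S` of nonempty closed subsets of
`X`, if the HSOP implies the HCRP for `f` (with respect to `S`), then the following are
equivalent: (i) `f` has the HCRP w.r.t. `S`; (ii) `f` has the HSOP w.r.t. `S`; (iii)
Player II has a winning strategy in `G₁(S, f)`; (iv) Player I has no winning strategy in
`G₁(S, f)`. -/
theorem HCRP_HSOP_game_tfae {X : Type*} [MetricSpace X] [CompleteSpace X]
    (S : Set (Set X)) (hcl : ∀ P ∈ S, IsClosed P) (hne : ∀ P ∈ S, P.Nonempty)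
    (hd : DenseFamily S) (f : X → ℝ) (himp : HSOP f S → HCRP f S) :
    [HCRP f S, HSOP f S, G1WinII S f, ¬ G1WinI S f].TFAE := by
  tfae_have 1 → 3 := winII_of_HCRP hcl hd
  tfae_have 3 → 4 := not_winI_of_winII
  tfae_have 4 → 2 := fun h => by
    by_contra hf
    exact h (winI_of_not_HSOP hne hf)
  tfae_have 2 → 1 := himp
  tfae_finish
end

section
/- Let X be a Polish space without isolated points and f : X → ℝ. If f has the HSOP with respect to the family Perf of all nonempty perfect subsets of X, then f is Marczewski measurable. -/
/-!
Fix an open set `U ⊆ ℝ` and a nonempty perfect set `P`. If some nonempty perfect subset of `P`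
is mapped into `U`, there is nothing to prove. Otherwise, every nonempty perfect `Q ⊆ P`
contains, by the HSOP, a nonempty perfect `R` whose image has diameter less than `1 / (n + 1)`
(`exists_perfect_small_image`); since `R` is not mapped into `U`, all of `f '' R` lies within
`1 / (n + 1)` of the complement of `U`. Hence the sets
`A n = {x | f x is within 1 / (n + 1) of Uᶜ}` are "dense" below `P` in the order of perfect sets,
and a Cantor scheme whose sets at level `n + 1` lie inside `A n` (`exists_perfect_subset_iInter`)
produces a nonempty perfect subset of `P` inside `⋂ n, A n`. Because `Uᶜ` is closed, `f` maps
that set into `Uᶜ`.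
-/

open Filter Topology

/-- The family of all nonempty perfect subsets of `X` (closed sets with no isolated
points). -/
def PerfFam (X : Type*) [TopologicalSpace X] : Set (Set X) :=
  {P : Set X | Perfect P ∧ P.Nonempty}

/-- `E` is an (s)-set (Marczewski measurable set): every nonempty perfect set `P` has a
nonempty perfect subset `Q` with `Q ⊆ E` or `Q ⊆ P \\ E`. -/
def IsSSet {X : Type*} [TopologicalSpace X] (E : Set X) : Prop :=
  ∀ P : Set X, Perfect P → P.Nonempty →
    ∃ Q : Set X, Perfect Q ∧ Q.Nonempty ∧ Q ⊆ P ∧ (Q ⊆ E ∨ Q ⊆ P \ E)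

/-- `f` is Marczewski measurable: preimages of open sets are (s)-sets. -/
def MarczewskiMeasurable {X : Type*} [TopologicalSpace X] (f : X → ℝ) : Prop :=
  ∀ U : Set ℝ, IsOpen U → IsSSet (f ⁻¹' U)

open Set Function CantorScheme
open scoped ENNReal

/-- Fusion: if every nonempty perfect subset of `P` can be shrunk into each `A n`, then `P` can be
shrunk into all the `A n` simultaneously. -/
theorem exists_perfect_subset_iInter {X : Type*} [MetricSpace X] [CompleteSpace X]
    [TopologicalSpace.SeparableSpace X] {P : Set X} (hP : Perfect P) (hne : P.Nonempty)
    (A : ℕ → Set X)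
    (hA : ∀ n, ∀ Q, Perfect Q → Q.Nonempty → Q ⊆ P →
      ∃ R, Perfect R ∧ R.Nonempty ∧ R ⊆ Q ∧ R ⊆ A n) :
    ∃ Q, Perfect Q ∧ Q.Nonempty ∧ Q ⊆ P ∧ ∀ n, Q ⊆ A n := by
  obtain ⟨u, -, upos', hu⟩ := exists_seq_strictAnti_tendsto' (zero_lt_one' ℝ≥0∞)
  have upos := fun n => (upos' n).1
  let F := Subtype fun E : Set X => Perfect E ∧ E.Nonempty ∧ E ⊆ P
  have split : ∀ (C : F) (n : ℕ), ∃ G : Bool → F,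
      (∀ b, (G b).1 ⊆ C.1 ∧ (G b).1 ⊆ A n ∧ Metric.ediam (G b).1 ≤ u n) ∧
      ∀ a b, a ≠ b → Disjoint (G a).1 (G b).1 := by
    rintro ⟨C, hC, hCne, hCP⟩ n
    obtain ⟨C₀, C₁, ⟨p0, n0, s0, d0⟩, ⟨p1, n1, s1, d1⟩, hd⟩ :=
      hC.small_diam_splitting hCne (upos n)
    obtain ⟨R₀, q0, m0, t0, a0⟩ := hA n C₀ p0 n0 (s0.trans hCP)
    obtain ⟨R₁, q1, m1, t1, a1⟩ := hA n C₁ p1 n1 (s1.trans hCP)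
    refine ⟨fun b => bif b then ⟨R₁, q1, m1, (t1.trans s1).trans hCP⟩ else
      ⟨R₀, q0, m0, (t0.trans s0).trans hCP⟩, ?_, ?_⟩
    · rintro (_ | _)
      · exact ⟨t0.trans s0, a0, (Metric.ediam_mono t0).trans d0⟩
      · exact ⟨t1.trans s1, a1, (Metric.ediam_mono t1).trans d1⟩
    · rintro (_ | _) (_ | _) hab
      · exact absurd rfl hab
      · exact hd.mono t0 t1
      · exact (hd.mono t0 t1).symm
      · exact absurd rfl hab
  choose G hG hGd using split
  let DP : List Bool → F := fun l =>
    List.rec (⟨P, hP, hne, subset_rfl⟩ : F) (fun a l ih => G ih l.length a) l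
  let D : List Bool → Set X := fun l => (DP l).1
  have hanti : ClosureAntitone D :=
    Antitone.closureAntitone (fun l a => (hG (DP l) l.length a).1)
      fun l => (DP l).2.1.closed
  have hdiam : VanishingDiam D := by
    intro x
    rw [← Filter.tendsto_add_atTop_iff_nat 1]
    refine tendsto_of_tendsto_of_tendsto_of_le_of_le tendsto_const_nhds hu
      (fun _ => zero_le) fun n => ?_
    have := (hG (DP (PiNat.res x n)) (PiNat.res x n).length (x n)).2.2
    rw [PiNat.res_length] at this
    simpa [D, DP, PiNat.res_succ, PiNat.res_length] using this
  have hdisj : CantorScheme.Disjoint D := fun l a b hab => hGd (DP l) l.length a b hab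
  have hdom : ∀ x : ℕ → Bool, x ∈ (inducedMap D).1 := fun x => by
    rw [hanti.map_of_vanishingDiam hdiam fun l => (DP l).2.2.1]
    apply mem_univ
  let g : (ℕ → Bool) → X := fun x => (inducedMap D).2 ⟨x, hdom x⟩
  have hgc : Continuous g := hdiam.map_continuous.comp (by fun_prop)
  have hgi : Injective g := fun x y hxy => by
    simpa only [← Subtype.val_inj] using hdisj.map_injective hxy
  have hmem : ∀ x n, g x ∈ D (PiNat.res x n) := fun x n => map_mem ⟨x, hdom x⟩ n
  -- The range of `g` is closed and uncountable, so its perfect kernel is nonempty.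
  have hunc : ¬ (range g).Countable := by
    intro hcount
    have h1 : (univ : Set (ℕ → Bool)).Countable :=
      countable_of_injective_of_countable_image hgi.injOn (by rwa [image_univ])
    rw [← Cardinal.le_aleph0_iff_set_countable, Cardinal.mk_univ] at h1
    simp only [Cardinal.mk_pi, Cardinal.mk_bool, Cardinal.prod_const] at h1
    simp at h1
    exact absurd h1 (not_le.mpr Cardinal.aleph0_lt_continuum)
  have : SecondCountableTopology X := UniformSpace.secondCountable_of_separable X
  obtain ⟨Q, hQ, hQne, hQs⟩ := exists_perfect_nonempty_of_isClosed_of_not_countable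
    (isCompact_range hgc).isClosed hunc
  refine ⟨Q, hQ, hQne, fun y hy => ?_, fun n y hy => ?_⟩
  · obtain ⟨x, rfl⟩ := hQs hy
    exact hmem x 0
  · obtain ⟨x, rfl⟩ := hQs hy
    have := (hG (DP (PiNat.res x n)) (PiNat.res x n).length (x n)).2.1
    rw [PiNat.res_length] at this
    apply this
    have h2 := hmem x (n + 1)
    rw [PiNat.res_succ] at h2
    simpa [D, DP, PiNat.res_length] using h2

/-- Under the HSOP, every nonempty perfect set has a nonempty perfect subset on which `f` varies
by less than `α`: take a small portion of the set supplied by the HSOP. -/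
theorem exists_perfect_small_image {X : Type*} [MetricSpace X] {f : X → ℝ}
    (h : HSOP f (PerfFam X)) {α : ℝ} (hα : 0 < α) {Q : Set X} (hQ : Perfect Q)
    (hne : Q.Nonempty) :
    ∃ R, Perfect R ∧ R.Nonempty ∧ R ⊆ Q ∧ ∀ x ∈ R, ∀ y ∈ R, dist (f x) (f y) < α := by
  obtain ⟨Q', ⟨hQ', x, hx⟩, hsub, hosc⟩ := h α hα Q ⟨hQ, hne⟩
  have hlt := hosc x hx
  simp only [osc, iInf_lt_iff] at hlt
  obtain ⟨ε, hε, hlt⟩ := hlt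
  have hp := hQ'.closure_nhds_inter x hx (Metric.mem_ball_self (half_pos hε)) Metric.isOpen_ball
  have hR : closure (Metric.ball x (ε / 2) ∩ Q') ⊆ Q' :=
    closure_minimal inter_subset_right hQ'.closed
  have hR' : closure (Metric.ball x (ε / 2) ∩ Q') ⊆ Q' ∩ Metric.ball x ε := fun y hy =>
    ⟨hR hy, Metric.closedBall_subset_ball (half_lt_self hε)
      (Metric.closure_ball_subset_closedBall (closure_mono inter_subset_left hy))⟩
  refine ⟨_, hp.1, hp.2, hR.trans hsub, fun y hy z hz => ?_⟩
  have := (Metric.edist_le_ediam_of_mem (mem_image_of_mem f (hR' hy))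
    (mem_image_of_mem f (hR' hz))).trans_lt hlt
  rw [edist_dist] at this
  exact (ENNReal.ofReal_lt_ofReal_iff hα).1 this

/-- If `X` is a Polish space (here: a complete separable metric space) without isolated
points and `f` has the HSOP with respect to the family of all nonempty perfect subsets of
`X`, then `f` is Marczewski measurable. -/
theorem marczewski_of_HSOP_perf {X : Type*} [MetricSpace X] [CompleteSpace X]
    [TopologicalSpace.SeparableSpace X]
    (hiso : ∀ x : X, (nhdsWithin x {x}ᶜ).NeBot) (f : X → ℝ)
    (h : HSOP f (PerfFam X)) : MarczewskiMeasurable f := by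
  intro U hU P hP hne
  by_cases hex : ∃ Q : Set X, Perfect Q ∧ Q.Nonempty ∧ Q ⊆ P ∧ Q ⊆ f ⁻¹' U
  · obtain ⟨Q, h1, h2, h3, h4⟩ := hex
    exact ⟨Q, h1, h2, h3, Or.inl h4⟩
  obtain ⟨Q, hQ, hQne, hQP, hQA⟩ := exists_perfect_subset_iInter hP hne
    (fun n => {x | ∃ y ∈ Uᶜ, dist (f x) y < 1 / ((n : ℝ) + 1)}) (by
      intro n Q hQ hQne hQP
      obtain ⟨R, hR, hRne, hRQ, hRd⟩ :=
        exists_perfect_small_image h (Nat.one_div_pos_of_nat (n := n) (α := ℝ)) hQ hQne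
      obtain ⟨z, hz, hzU⟩ : ∃ z ∈ R, f z ∉ U := by
        by_contra! hc
        exact hex ⟨R, hR, hRne, hRQ.trans hQP, hc⟩
      exact ⟨R, hR, hRne, hRQ, fun x hx => ⟨f z, hzU, hRd x hx z hz⟩⟩)
  refine ⟨Q, hQ, hQne, hQP, Or.inr fun x hx => ⟨hQP hx, ?_⟩⟩
  have hcl : f x ∈ closure Uᶜ := Metric.mem_closure_iff.2 fun ε hε => by
    obtain ⟨n, hn⟩ := exists_nat_one_div_lt hε
    obtain ⟨y, hy, hd⟩ := hQA n hx
    exact ⟨y, hy, hd.trans hn⟩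
  rwa [hU.isClosed_compl.closure_eq] at hcl
end

section
/- Let X be a Polish space without isolated points, μ a finite nonatomic Borel measure on X, and f : X → ℝ. If f has the HSOP with respect to the family Perf⁺ of all nonempty perfect subsets of X of positive μ-measure, then f is measurable with respect to the completion of μ. -/
/-!
Fix reals `a < b` and let `A`, `B` be measurable hulls of `{f < a}` and `{b < f}`. If `μ (A ∩ B) > 0`,
then inner regularity, the Cantor–Bendixson theorem and nonatomicity give a perfect subset of
`A ∩ B` of positive measure (`exists_perfPlus_subset`), and the HSOP shrinks it to a perfect `Q` of
positive measure on which `f` has oscillation less than `b - a`. Hence some relatively open `T ⊆ Q`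
of positive measure has `diam f(T) < b - a`, so `T` misses `{f < a}` or `{b < f}`
(`exists_pos_measure_dist_lt`). This is impossible: a measurable set contained in the hull of `E`
and disjoint from `E` is null. So `μ (A ∩ B) = 0`, i.e. sublevel and superlevel sets of `f` at
distinct levels are almost separated by measurable sets, and such an `f` is almost everywhere
measurable.
-/


open Filter Topology

/-- The family of all nonempty perfect subsets of `X` of positive `μ`-measure. -/
def PerfPlus {X : Type*} [TopologicalSpace X] [MeasurableSpace X]
    (μ : MeasureTheory.Measure X) : Set (Set X) :=
  {P : Set X | Perfect P ∧ P.Nonempty ∧ 0 < μ P}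

open MeasureTheory in
theorem exists_perfPlus_subset {X : Type*} [MetricSpace X]
    [SecondCountableTopology X] [MeasurableSpace X] [BorelSpace X]
    (μ : Measure X) [IsFiniteMeasure μ] (hna : ∀ x : X, μ {x} = 0)
    {A : Set X} (hA : MeasurableSet A) (hpos : 0 < μ A) :
    ∃ P ∈ PerfPlus μ, P ⊆ A := by
  obtain ⟨K, hKA, hK, hKpos⟩ := hA.exists_lt_isClosed_of_ne_top (measure_ne_top μ A) hpos
  obtain ⟨V, D, hV, hD, rfl⟩ := exists_countable_union_perfect_of_isClosed hK
  have hV0 : μ V = 0 := by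
    rw [← Set.biUnion_of_singleton V]
    exact (measure_biUnion_null_iff hV).2 fun x _ => hna x
  have hDpos : 0 < μ D := by
    have := measure_union_le (μ := μ) V D
    rw [hV0, zero_add] at this
    exact hKpos.trans_le this
  exact ⟨D, ⟨hD, nonempty_of_measure_ne_zero hDpos.ne', hDpos⟩,
    Set.subset_union_right.trans hKA⟩

open MeasureTheory in
/-- Under the HSOP, every measurable set of positive measure has a measurable subset of positive
measure on which the values of `f` differ by less than a prescribed `α`. The local smallness of the
oscillation becomes uniform by restricting to a ball around a point of the support. -/
theorem exists_pos_measure_dist_lt {X : Type*} [MetricSpace X]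
    [SecondCountableTopology X] [MeasurableSpace X] [BorelSpace X]
    (μ : Measure X) [IsFiniteMeasure μ] (hna : ∀ x : X, μ {x} = 0) {f : X → ℝ}
    (h : HSOP f (PerfPlus μ)) {A : Set X} (hA : MeasurableSet A) (hpos : 0 < μ A)
    {α : ℝ} (hα : 0 < α) :
    ∃ T ⊆ A, MeasurableSet T ∧ 0 < μ T ∧ ∀ x ∈ T, ∀ y ∈ T, dist (f x) (f y) < α := by
  obtain ⟨P, hP, hPA⟩ := exists_perfPlus_subset μ hna hA hpos
  obtain ⟨Q, ⟨hQ, -, hQpos⟩, hQP, hosc⟩ := h α hα P hP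
  obtain ⟨x, hxQ, hx⟩ := exists_mem_forall_mem_nhdsWithin_pos_measure hQpos.ne'
  have hx' := hosc x hxQ
  simp only [osc, iInf_lt_iff] at hx'
  obtain ⟨ε, hε, hdiam⟩ := hx'
  refine ⟨Q ∩ Metric.ball x ε, Set.inter_subset_left.trans (hQP.trans hPA),
    hQ.closed.measurableSet.inter measurableSet_ball,
    hx _ (inter_mem_nhdsWithin Q (Metric.ball_mem_nhds x hε)), fun y hy z hz => ?_⟩
  have := (Metric.edist_le_ediam_of_mem (Set.mem_image_of_mem f hy)
    (Set.mem_image_of_mem f hz)).trans_lt hdiam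
  rwa [edist_dist, ENNReal.ofReal_lt_ofReal_iff hα] at this

open MeasureTheory in
theorem measure_hull_inter_hull_eq_zero {X : Type*} [MetricSpace X]
    [SecondCountableTopology X] [MeasurableSpace X] [BorelSpace X]
    (μ : Measure X) [IsFiniteMeasure μ] (hna : ∀ x : X, μ {x} = 0) {f : X → ℝ}
    (h : HSOP f (PerfPlus μ)) {a b : ℝ} (hab : a < b) :
    μ (toMeasurable μ {x | f x < a} ∩ toMeasurable μ {x | b < f x}) = 0 := by
  by_contra hne
  obtain ⟨T, hT, hTm, hTpos, hdist⟩ := exists_pos_measure_dist_lt μ hna h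
    ((measurableSet_toMeasurable μ _).inter (measurableSet_toMeasurable μ _))
    (pos_iff_ne_zero.2 hne) (sub_pos.2 hab)
  -- A subset of the hull of `E` of positive measure meets `E`.
  have key : ∀ E : Set X, T ⊆ toMeasurable μ E → (E ∩ T).Nonempty := by
    intro E hE
    apply nonempty_of_measure_ne_zero (μ := μ)
    rw [← Measure.measure_toMeasurable_inter hTm (measure_ne_top μ E), Set.inter_eq_right.2 hE]
    exact hTpos.ne'
  obtain ⟨y, hya, hyT⟩ := key _ (hT.trans Set.inter_subset_left)
  obtain ⟨z, hzb, hzT⟩ := key _ (hT.trans Set.inter_subset_right)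
  have hyz := hdist z hzT y hyT
  rw [Real.dist_eq] at hyz
  have := (abs_lt.1 hyz).2
  simp only [Set.mem_ofPred_eq] at hya hzb
  linarith

/-- If `X` is a Polish space (here: a complete separable metric space) without isolated
points, `μ` is a finite nonatomic Borel measure on `X` and `f` has the HSOP with respect to
the family of all nonempty perfect subsets of `X` of positive `μ`-measure, then `f` is
measurable with respect to the completion of `μ` (preimages of open sets are null
measurable). -/
theorem nullMeasurable_of_HSOP_perfPlus {X : Type*} [MetricSpace X] [CompleteSpace X]
    [TopologicalSpace.SeparableSpace X] [MeasurableSpace X] [BorelSpace X]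
    (hiso : ∀ x : X, (nhdsWithin x {x}ᶜ).NeBot)
    (μ : MeasureTheory.Measure X) [MeasureTheory.IsFiniteMeasure μ]
    (hna : ∀ x : X, μ {x} = 0) (f : X → ℝ)
    (h : HSOP f (PerfPlus μ)) :
    ∀ U : Set ℝ, IsOpen U → MeasureTheory.NullMeasurableSet (f ⁻¹' U) μ := by
  have : SecondCountableTopology X := UniformSpace.secondCountable_of_separable X
  obtain ⟨s, hsc, hsd⟩ := TopologicalSpace.exists_countable_dense EReal
  -- The separation criterion needs a complete linear order as codomain, hence the detour by `EReal`.
  have hg : AEMeasurable (fun x => (f x : EReal)) μ := by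
    refine MeasureTheory.aemeasurable_of_exist_almost_disjoint_supersets μ s hsc hsd _ ?_
    intro p _ q _ hpq
    obtain ⟨a, hpa, haq⟩ := EReal.lt_iff_exists_real_btwn.1 hpq
    obtain ⟨b, hab, hbq⟩ := EReal.lt_iff_exists_real_btwn.1 haq
    refine ⟨_, _, MeasureTheory.measurableSet_toMeasurable μ {x | f x < a},
      MeasureTheory.measurableSet_toMeasurable μ {x | b < f x},
      subset_trans (fun x hx => ?_) (MeasureTheory.subset_toMeasurable μ _),
      subset_trans (fun x hx => ?_) (MeasureTheory.subset_toMeasurable μ _),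
      measure_hull_inter_hull_eq_zero μ hna h (EReal.coe_lt_coe_iff.1 hab)⟩
    · exact EReal.coe_lt_coe_iff.1 (lt_trans hx hpa)
    · exact EReal.coe_lt_coe_iff.1 (lt_trans hbq hx)
  have hf : AEMeasurable f μ := by
    simpa using hg.ereal_toReal
  intro U hU
  exact hf.nullMeasurable hU.measurableSet
end

section
/- Let X be a Polish space without isolated points and f : X → ℝ. If f has the HSOP with respect to the family G_Res, then f is Baire measurable. -/
/-!
The HSOP makes `f` continuous on a residual set. Fix `α > 0`. Applying the property to a nonempty
open set `V` gives `Q ⊆ V` residual in some nonempty open `U`; by the Baire category theorem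
`Q` has a point, and near that point `f` varies by less than `α` on `Q`. So every nonempty open set
contains a nonempty open set `W` on which, off a meagre set, `f` varies by less than `α`
(`exists_smallVar_subset`). By separability countably many such `W` cover a dense open set, so off
one meagre set `f` locally varies by less than `α` (`eventually_residual_smallOsc`). Intersecting
over `α = 1 / (n + 1)` gives a residual set on which `f` is continuous, hence the preimage of an
open set agrees with an open set up to a meagre set.
-/

open Filter Topology

/-- `GRes X` is the family of all `Gδ` subsets `G` of `X` that are residual in some
nonempty open set `U`, i.e. `G ⊆ U` and `U \\ G` is meager. -/
def GRes (X : Type*) [TopologicalSpace X] : Set (Set X) :=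
  {G : Set X | IsGδ G ∧ ∃ U : Set X, IsOpen U ∧ U.Nonempty ∧ G ⊆ U ∧ IsMeagre (U \ G)}

/-- `s` has the Baire property: it differs from an open set by a meager set. -/
def HasBaireProperty {X : Type*} [TopologicalSpace X] (s : Set X) : Prop :=
  ∃ U : Set X, IsOpen U ∧ IsMeagre (symmDiff s U)

/-- `f` is Baire measurable: preimages of open sets have the Baire property. -/
def BaireMeasurableFun {X : Type*} [TopologicalSpace X] (f : X → ℝ) : Prop :=
  ∀ U : Set ℝ, IsOpen U → HasBaireProperty (f ⁻¹' U)

/-- `f` varies by less than `α` on the part of `W` lying in some set `Q`, where `W \ Q` is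
meagre. -/
def SmallVar {X : Type*} [TopologicalSpace X] (f : X → ℝ) (α : ℝ) (W : Set X) : Prop :=
  ∃ Q : Set X, IsMeagre (W \ Q) ∧ ∀ y ∈ Q ∩ W, ∀ z ∈ Q ∩ W, dist (f y) (f z) < α

lemma exists_smallVar_subset {X : Type*} [MetricSpace X] [CompleteSpace X] {f : X → ℝ}
    (h : HSOP f (GRes X)) {α : ℝ} (hα : 0 < α) {V : Set X} (hV : IsOpen V) (hne : V.Nonempty) :
    ∃ W : Set X, IsOpen W ∧ W.Nonempty ∧ W ⊆ V ∧ SmallVar f α W := by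
  obtain ⟨Q, ⟨-, U, hU, hUne, hQU, hm⟩, hQV, hosc⟩ :=
    h α hα V ⟨hV.isGδ, V, hV, hne, subset_rfl, by simpa using IsMeagre.empty⟩
  obtain ⟨x, hxU, hx⟩ := (dense_of_mem_residual hm).inter_open_nonempty U hU hUne
  have hxQ : x ∈ Q := by
    by_contra hxQ
    exact hx ⟨hxU, hxQ⟩
  have hlt := hosc x hxQ
  simp only [osc, iInf_lt_iff] at hlt
  obtain ⟨ε, hε, hlt⟩ := hlt
  refine ⟨U ∩ V ∩ Metric.ball x ε, (hU.inter hV).inter Metric.isOpen_ball,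
    ⟨x, ⟨hxU, hQV hxQ⟩, Metric.mem_ball_self hε⟩, fun y hy => hy.1.2, Q,
    IsMeagre.mono (fun y hy => Set.mem_sdiff_of_mem hy.1.1.1 hy.2) hm, fun y hy z hz => ?_⟩
  have hy' : y ∈ Q ∩ Metric.ball x ε := ⟨hy.1, hy.2.2⟩
  have hz' : z ∈ Q ∩ Metric.ball x ε := ⟨hz.1, hz.2.2⟩
  have hle := Metric.edist_le_ediam_of_mem (Set.mem_image_of_mem f hy') (Set.mem_image_of_mem f hz')
  have := hle.trans_lt hlt
  rw [edist_dist] at this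
  exact (ENNReal.ofReal_lt_ofReal_iff hα).1 this

lemma eventually_residual_smallOsc {X : Type*} [MetricSpace X] [CompleteSpace X]
    [TopologicalSpace.SeparableSpace X] {f : X → ℝ} (h : HSOP f (GRes X)) {α : ℝ} (hα : 0 < α) :
    ∃ R ∈ residual X, ∀ x ∈ R, ∃ W, IsOpen W ∧ x ∈ W ∧ ∀ y ∈ R ∩ W, dist (f y) (f x) < α := by
  have : SecondCountableTopology X := UniformSpace.secondCountable_of_separable X
  obtain ⟨T, hTc, hTS, hTU⟩ := TopologicalSpace.isOpen_sUnion_countable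
    {W : Set X | IsOpen W ∧ SmallVar f α W} fun W hW => hW.1
  have hdense : Dense (⋃₀ T) := by
    rw [hTU, dense_iff_inter_open]
    intro V hV hne
    obtain ⟨W, hW, ⟨x, hx⟩, hWV, hs⟩ := exists_smallVar_subset h hα hV hne
    exact ⟨x, hWV hx, W, ⟨hW, hs⟩, hx⟩
  choose! Q hQm hQ using fun W (hW : W ∈ T) => (hTS hW).2
  refine ⟨⋃₀ T ∩ (⋃ W ∈ T, W \ Q W)ᶜ, inter_mem
    (residual_of_dense_open (isOpen_sUnion fun W hW => (hTS hW).1) hdense)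
    (isMeagre_biUnion hTc hQm), ?_⟩
  have key : ∀ W ∈ T, ∀ y ∈ W, y ∈ (⋃ W ∈ T, W \ Q W)ᶜ → y ∈ Q W ∩ W := by
    intro W hW y hy hyc
    refine ⟨?_, hy⟩
    by_contra hyQ
    exact hyc (Set.mem_biUnion hW ⟨hy, hyQ⟩)
  rintro x ⟨⟨W, hW, hxW⟩, hx⟩
  exact ⟨W, (hTS hW).1, hxW, fun y hy => hQ W hW y (key W hW y hy.2 hy.1.2) x (key W hW x hxW hx)⟩

/-- If `X` is a Polish space (here: a complete separable metric space) without isolated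
points and `f` has the HSOP with respect to the family `GRes X` of `Gδ` sets residual in
some nonempty open set, then `f` is Baire measurable. -/
theorem baireMeasurable_of_HSOP_GRes {X : Type*} [MetricSpace X] [CompleteSpace X]
    [TopologicalSpace.SeparableSpace X]
    (hiso : ∀ x : X, (nhdsWithin x {x}ᶜ).NeBot) (f : X → ℝ)
    (h : HSOP f (GRes X)) : BaireMeasurableFun f := by
  intro O hO
  choose R hR hRW using fun n : ℕ => eventually_residual_smallOsc h (Nat.one_div_pos_of_nat (n := n))
  have hcont : ContinuousOn f (⋂ n, R n) := by
    intro x hx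
    rw [ContinuousWithinAt, Metric.tendsto_nhds]
    intro ε hε
    obtain ⟨n, hn⟩ := exists_nat_one_div_lt hε
    obtain ⟨W, hW, hxW, hd⟩ := hRW n x (Set.mem_iInter.1 hx n)
    filter_upwards [self_mem_nhdsWithin, mem_nhdsWithin_of_mem_nhds (hW.mem_nhds hxW)]
      with y hy hyW
    exact (hd y ⟨Set.mem_iInter.1 hy n, hyW⟩).trans hn
  obtain ⟨G, hG, heq⟩ := continuousOn_iff'.1 hcont O hO
  refine ⟨G, hG, mem_of_superset (countable_iInter_mem.2 hR) fun x hx hxs => ?_⟩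
  have hiff : x ∈ f ⁻¹' O ↔ x ∈ G := by
    simpa [hx] using Set.ext_iff.1 heq x
  rcases hxs with hxs | hxs
  · exact hxs.2 (hiff.1 hxs.1)
  · exact hxs.2 (hiff.2 hxs.1)
end

section
/- Let X be a Polish space without isolated points, Perf the family of all nonempty perfect subsets of X, and f : X → ℝ. Then f has the HSOP with respect to Perf if and only if f has the HCRP with respect to Perf. -/
/-!
If `f ↾ Q` is continuous, its oscillation vanishes at every point of `Q`, so HCRP implies HSOP.

For the converse, HSOP shrinks any nonempty perfect set to a nonempty perfect set on which the
total diameter of the values of `f` is as small as desired (`HSOP.exists_small_image`): take a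
perfect subset with small oscillation everywhere and intersect it with a small ball around one of
its points. Combining this with the splitting of perfect sets into disjoint perfect pieces of small
diameter (`HSOP.exists_split`), one builds inside a given perfect set a Cantor scheme of perfect
sets `D l` such that both `diam (D l)` and `diam (f '' D l)` tend to `0` along each branch. The
induced map `g : (ℕ → Bool) → X` is continuous and injective, and `f ∘ g` is continuous as well
(`HSOP.exists_cantor_map`). By compactness `g` is a closed embedding, so its range is perfect
and `f` is continuous on it.
-/

open Filter Topology

open Set

/-- A point of the Cantor space is the limit of the sequence obtained by flipping its `n`-th
coordinate, hence the range of a continuous injection has no isolated points. -/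
lemma perfect_range_of_cantor {X : Type*} [TopologicalSpace X] [T2Space X] {g : (ℕ → Bool) → X}
    (hg : Continuous g) (hinj : Function.Injective g) : Perfect (range g) := by
  refine ⟨(isCompact_range hg).isClosed, preperfect_iff_nhds.2 ?_⟩
  rintro _ ⟨x, rfl⟩ U hU
  have hlim : Tendsto (fun n => Function.update x n (!x n)) atTop (𝓝 x) := by
    rw [tendsto_pi_nhds]
    intro i
    refine tendsto_const_nhds.congr' ?_
    filter_upwards [eventually_gt_atTop i] with n hn
    rw [Function.update_of_ne hn.ne]
  obtain ⟨n, hn⟩ := (((hg.tendsto x).comp hlim).eventually_mem hU).exists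
  refine ⟨_, ⟨hn, mem_range_self _⟩, fun h => ?_⟩
  have := congrFun (hinj h) n
  simp at this

section

variable {X : Type*} [MetricSpace X] {f : X → ℝ}

/-- Small oscillation at a single point of a perfect set already yields a perfect subset,
the image of which under `f` has small diameter. -/
lemma HSOP.exists_small_image (h : HSOP f (PerfFam X)) {P : Set X} (hP : P ∈ PerfFam X)
    {α : ℝ} (hα : 0 < α) :
    ∃ Q ∈ PerfFam X, Q ⊆ P ∧ Metric.ediam (f '' Q) ≤ ENNReal.ofReal α := by
  obtain ⟨Q, ⟨hQ, x, hx⟩, hQP, hosc⟩ := h α hα P hP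
  obtain ⟨ε, hε, hlt⟩ : ∃ ε : ℝ, 0 < ε ∧
      Metric.ediam (f '' (Q ∩ Metric.ball x ε)) < ENNReal.ofReal α := by
    have := hosc x hx
    simp only [osc, iInf_lt_iff] at this
    obtain ⟨ε, hε, hlt⟩ := this
    exact ⟨ε, hε, hlt⟩
  have hsubQ : closure (Metric.ball x (ε / 2) ∩ Q) ⊆ Q :=
    closure_minimal inter_subset_right hQ.closed
  -- Halving the radius keeps the closure inside the open ball of radius `ε`.
  have hsubB : closure (Metric.ball x (ε / 2) ∩ Q) ⊆ Metric.ball x ε :=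
    (closure_mono inter_subset_left).trans (Metric.closure_ball_subset_closedBall.trans
      (Metric.closedBall_subset_ball (by linarith)))
  refine ⟨closure (Metric.ball x (ε / 2) ∩ Q),
    hQ.closure_nhds_inter x hx (Metric.mem_ball_self (by linarith)) Metric.isOpen_ball,
    hsubQ.trans hQP, (Metric.ediam_mono (image_mono (subset_inter hsubQ hsubB))).trans hlt.le⟩

/-- The inductive step in the construction of the Cantor scheme. -/
lemma HSOP.exists_split (h : HSOP f (PerfFam X)) (C : PerfFam X) {α : ℝ} (hα : 0 < α) :
    ∃ S : Bool → PerfFam X, (∀ b, (S b : Set X) ⊆ C ∧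
      Metric.ediam (S b : Set X) ≤ ENNReal.ofReal α ∧
      Metric.ediam (f '' (S b : Set X)) ≤ ENNReal.ofReal α) ∧
      ∀ a b, a ≠ b → Disjoint (S a : Set X) (S b) := by
  obtain ⟨C₀, C₁, ⟨hp₀, hn₀, hs₀, hd₀⟩, ⟨hp₁, hn₁, hs₁, hd₁⟩, hdisj⟩ :=
    C.2.1.small_diam_splitting C.2.2 (ENNReal.ofReal_pos.2 hα)
  obtain ⟨Q₀, hQ₀, hsub₀, him₀⟩ := h.exists_small_image ⟨hp₀, hn₀⟩ hα
  obtain ⟨Q₁, hQ₁, hsub₁, him₁⟩ := h.exists_small_image ⟨hp₁, hn₁⟩ hα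
  have hdisj' : Disjoint Q₀ Q₁ := hdisj.mono hsub₀ hsub₁
  refine ⟨fun b => bif b then ⟨Q₁, hQ₁⟩ else ⟨Q₀, hQ₀⟩, ?_, ?_⟩
  · rintro (_ | _)
    · exact ⟨hsub₀.trans hs₀, (Metric.ediam_mono hsub₀).trans hd₀, him₀⟩
    · exact ⟨hsub₁.trans hs₁, (Metric.ediam_mono hsub₁).trans hd₁, him₁⟩
  · rintro (_ | _) (_ | _) hab
    · exact absurd rfl hab
    · exact hdisj'
    · exact hdisj'.symm
    · exact absurd rfl hab

open CantorScheme PiNat in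
/-- The map induced by a Cantor scheme along which the diameters of both the sets and their images
under `f` vanish. -/
lemma HSOP.exists_cantor_map [CompleteSpace X] (h : HSOP f (PerfFam X)) (P : PerfFam X) :
    ∃ g : (ℕ → Bool) → X, range g ⊆ P ∧ Continuous g ∧ Function.Injective g ∧
      Continuous (f ∘ g) := by
  choose S hS hdisj using fun (C : PerfFam X) (n : ℕ) =>
    h.exists_split C (Nat.one_div_pos_of_nat (α := ℝ) (n := n))
  let DP : List Bool → PerfFam X := fun l => List.rec P (fun a l C => S C l.length a) l
  let D : List Bool → Set X := fun l => (DP l).1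
  have hu : Tendsto (fun n : ℕ => ENNReal.ofReal (1 / ((n : ℝ) + 1))) atTop (𝓝 0) := by
    simpa using ENNReal.tendsto_ofReal (tendsto_one_div_add_atTop_nhds_zero_nat (𝕜 := ℝ))
  have hanti : ClosureAntitone D :=
    Antitone.closureAntitone (fun l a => (hS (DP l) l.length a).1) fun l => (DP l).2.1.closed
  have hstep (x : ℕ → Bool) (n : ℕ) :
      Metric.ediam (D (res x (n + 1))) ≤ ENNReal.ofReal (1 / ((n : ℝ) + 1)) ∧
      Metric.ediam (f '' D (res x (n + 1))) ≤ ENNReal.ofReal (1 / ((n : ℝ) + 1)) := by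
    have := (hS (DP (res x n)) (res x n).length (x n)).2
    rw [res_length] at this
    simpa only [res_succ, D, DP, res_length] using this
  have hdiam : VanishingDiam D := fun x =>
    (tendsto_add_atTop_iff_nat 1).1 (tendsto_of_tendsto_of_tendsto_of_le_of_le tendsto_const_nhds
      hu (fun _ => zero_le) fun n => (hstep x n).1)
  have hfdiam : VanishingDiam fun l => f '' D l := fun x =>
    (tendsto_add_atTop_iff_nat 1).1 (tendsto_of_tendsto_of_tendsto_of_le_of_le tendsto_const_nhds
      hu (fun _ => zero_le) fun n => (hstep x n).2)
  have hdisj' : CantorScheme.Disjoint D := fun l a b hab => hdisj (DP l) l.length a b hab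
  have hdom (x : ℕ → Bool) : x ∈ (inducedMap D).1 := by
    rw [hanti.map_of_vanishingDiam hdiam fun l => (DP l).2.2]
    apply mem_univ
  refine ⟨fun x => (inducedMap D).2 ⟨x, hdom x⟩, ?_, ?_, ?_, ?_⟩
  · rintro y ⟨x, rfl⟩
    exact map_mem (A := D) ⟨_, hdom x⟩ 0
  · exact hdiam.map_continuous.comp (by fun_prop)
  · intro x y hxy
    simpa only [← Subtype.val_inj] using hdisj'.map_injective hxy
  · rw [Metric.continuous_iff']
    intro x ε hε
    obtain ⟨n, hn⟩ := hfdiam.dist_lt ε hε x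
    filter_upwards [(isOpen_cylinder _ x n).mem_nhds (self_mem_cylinder x n)] with y hy
    rw [cylinder_eq_res] at hy
    refine hn _ (mem_image_of_mem f ?_) _ (mem_image_of_mem f (map_mem (A := D) ⟨x, hdom x⟩ n))
    have hmem := map_mem (A := D) ⟨y, hdom y⟩ n
    have hres : res y n = res x n := hy
    rwa [← hres]

lemma ContinuousOn.osc_lt {Q : Set X} (hf : ContinuousOn f Q) {x : X} (hx : x ∈ Q) {α : ℝ}
    (hα : 0 < α) : osc f Q x < ENNReal.ofReal α := by
  obtain ⟨ε, hε, hball⟩ := Metric.continuousOn_iff.1 hf x hx (α / 4) (by linarith)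
  refine lt_of_le_of_lt (iInf₂_le ε hε) (lt_of_le_of_lt (b := ENNReal.ofReal (α / 2)) ?_
    ((ENNReal.ofReal_lt_ofReal_iff hα).2 (by linarith)))
  refine Metric.ediam_le ?_
  rintro _ ⟨y, ⟨hyQ, hy⟩, rfl⟩ _ ⟨z, ⟨hzQ, hz⟩, rfl⟩
  rw [edist_dist]
  refine ENNReal.ofReal_le_ofReal ?_
  have := dist_triangle_right (f y) (f z) (f x)
  linarith [hball y hyQ hy, hball z hzQ hz]

end

/-- For a Polish space `X` (here: a complete separable metric space) without isolated
points, `f` has the HSOP with respect to the family of all nonempty perfect subsets of `X`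
iff it has the HCRP with respect to that family. -/
theorem HSOP_iff_HCRP_perf {X : Type*} [MetricSpace X] [CompleteSpace X]
    [TopologicalSpace.SeparableSpace X]
    (hiso : ∀ x : X, (nhdsWithin x {x}ᶜ).NeBot) (f : X → ℝ) :
    HSOP f (PerfFam X) ↔ HCRP f (PerfFam X) := by
  constructor
  · intro h P hP
    obtain ⟨g, hgP, hg, hinj, hfg⟩ := h.exists_cantor_map ⟨P, hP⟩
    refine ⟨range g, ⟨perfect_range_of_cantor hg hinj, range_nonempty g⟩, hgP, ?_⟩
    -- A continuous surjection of a compact space onto a Hausdorff space is a quotient map.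
    have hquot : IsQuotientMap (rangeFactorization g) :=
      hg.rangeFactorization.isClosedMap.isQuotientMap hg.rangeFactorization
        rangeFactorization_surjective
    rw [continuousOn_iff_continuous_domRestrict, hquot.continuous_iff]
    exact hfg
  · intro h α hα P hP
    obtain ⟨Q, hQ, hQP, hf⟩ := h P hP
    exact ⟨Q, hQ, hQP, fun x hx => hf.osc_lt hx hα⟩
end

section
/- Let X be a Polish space without isolated points, μ a finite nonatomic Borel measure on X, Σ = Perf⁺ the family of all nonempty perfect subsets of X of positive μ-measure, and f : X → ℝ. Then the game G_1(Σ,f) is determined; moreover, if f is measurable with respect to the completion of μ then Player II has a winning strategy in G_1(Σ,f), and if f is not measurable with respect to the completion of μ then Player I has a winning strategy in G_1(Σ,f). -/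
/-!
The game is decided by two facts about a finite nonatomic Borel measure `μ`.

Every measurable set of positive measure contains a perfect one (`exists_perfPlus_subset`). If `f` is
measurable, countably many small balls of `X` and countably many preimages of small intervals cover
any `P ∈ Perf⁺`, so `P` contains some `D ∈ Perf⁺` such that `D` and its `f`-image have small diameter.
Player II follows a decreasing sequence `K n` of such sets with diameters tending to zero. The
points played are Cauchy, their limit `y` lies in every `K n`, and so `f (x n)` is close to `f y`.

If `f` is not measurable, there are `a < b` such that the measurable hulls of `{f ≤ a}` and
`{f ≥ b}` overlap in positive measure (`exists_overlap`). Player I opens with a perfect set of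
positive measure inside the overlap. Every answer of Player II then meets both level sets, so
Player I can alternate between them and keep the values of `f` from converging.
-/

open Filter Topology

namespace MeasureGame

open MeasureTheory

variable {X : Type*} [MeasurableSpace X] {μ : Measure X}

/-- If `f` is not measurable, two separated level sets `{f ≤ a}` and `{f ≥ b}` have measurable
hulls overlapping in positive measure: otherwise the hulls of `{f ≤ a}`, for `a` increasing to `b`,
would exhaust `{f < b}` up to a null set. -/
lemma exists_overlap {f : X → ℝ}
    (hf : ¬ ∀ U : Set ℝ, IsOpen U → NullMeasurableSet (f ⁻¹' U) μ) :
    ∃ a b : ℝ, a < b ∧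
      μ (toMeasurable μ (f ⁻¹' Set.Iic a) ∩ toMeasurable μ (f ⁻¹' Set.Ici b)) ≠ 0 := by
  by_contra! h
  apply hf
  have hIio : ∀ b : ℝ, NullMeasurableSet (f ⁻¹' Set.Iio b) μ := by
    intro b
    obtain ⟨u, -, hub, hu⟩ := exists_seq_strictMono_tendsto b
    have hM : MeasurableSet (⋃ n, toMeasurable μ (f ⁻¹' Set.Iic (u n))) :=
      MeasurableSet.iUnion fun n => measurableSet_toMeasurable _ _
    refine hM.nullMeasurableSet.congr (ae_eq_set.2 ⟨?_, ?_⟩)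
    · refine measure_mono_null ?_ (measure_iUnion_null fun n => h (u n) b (hub n))
      rintro x ⟨hx, hxb⟩
      obtain ⟨n, hn⟩ := Set.mem_iUnion.1 hx
      exact Set.mem_iUnion.2 ⟨n, hn, subset_toMeasurable _ _ (not_lt.1 hxb : b ≤ f x)⟩
    · refine measure_mono_null (t := ∅) ?_ measure_empty
      rintro x ⟨hx, hxn⟩
      obtain ⟨n, hn⟩ := (hu.eventually (lt_mem_nhds hx)).exists
      exact hxn (Set.mem_iUnion.2 ⟨n, subset_toMeasurable _ _ (le_of_lt hn)⟩)
  have hnm : NullMeasurable f μ :=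
    @measurable_of_Iio ℝ (NullMeasurableSpace X μ) _ _ _ _ _ _ _ f hIio
  exact fun U hU => hnm hU.measurableSet

variable [MetricSpace X] [BorelSpace X] [IsFiniteMeasure μ]

/-- A positive measure subset of the measurable hull of `A` meets `A`. -/
lemma inter_nonempty_of_subset_toMeasurable {A Q : Set X} (hQ : Q ∈ PerfPlus μ)
    (hQA : Q ⊆ toMeasurable μ A) : (Q ∩ A).Nonempty := by
  have h := Measure.measure_toMeasurable_inter hQ.1.closed.measurableSet (measure_ne_top μ A)
  rw [Set.inter_eq_self_of_subset_right hQA, Set.inter_comm] at h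
  exact nonempty_of_measure_ne_zero (h ▸ hQ.2.2.ne')

variable [TopologicalSpace.SeparableSpace X]

/-- Every non-null measurable set contains a member of `PerfPlus μ`: take a closed subset of
positive measure
and split it by Cantor-Bendixson; its countable part is null because `μ` has no atoms. -/
lemma exists_perfPlus_subset (hna : ∀ x : X, μ {x} = 0) {A : Set X}
    (hA : NullMeasurableSet A μ) (h0 : μ A ≠ 0) : ∃ D ∈ PerfPlus μ, D ⊆ A := by
  have : NullSingletonClass μ := ⟨hna⟩
  obtain ⟨B, hBA, hB, hBe⟩ := hA.exists_measurable_subset_ae_eq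
  have hB0 : 0 < μ B := by
    rw [measure_congr hBe]
    exact pos_iff_ne_zero.2 h0
  obtain ⟨F, hFB, hF, hF0⟩ := hB.exists_lt_isClosed_of_ne_top (measure_ne_top μ B) hB0
  obtain ⟨V, D, hV, hD, hFV⟩ := exists_countable_union_perfect_of_isClosed hF
  have hD0 : 0 < μ D := by
    have h1 : μ F ≤ μ V + μ D := hFV ▸ measure_union_le V D
    rw [hV.measure_zero, zero_add] at h1
    exact hF0.trans_le h1
  refine ⟨D, ⟨hD, nonempty_of_measure_ne_zero hD0.ne', hD0⟩, ?_⟩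
  exact (hFV ▸ Set.subset_union_right : D ⊆ F).trans (hFB.trans hBA)

/-- Player II's shrinking step: both the set and its `f`-image can be made small. -/
lemma exists_perfPlus_small (hna : ∀ x : X, μ {x} = 0) {f : X → ℝ}
    (hf : ∀ U : Set ℝ, IsOpen U → NullMeasurableSet (f ⁻¹' U) μ)
    {P : Set X} (hP : P ∈ PerfPlus μ) {ε : ℝ} (hε : 0 < ε) :
    ∃ D ∈ PerfPlus μ, D ⊆ P ∧ ∀ x ∈ D, ∀ y ∈ D, dist x y < ε ∧ dist (f x) (f y) < ε := by
  have : Nonempty X := hP.2.1.to_type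
  let A : ℕ × ℕ → Set X := fun p =>
    P ∩ (Metric.ball (TopologicalSpace.denseSeq X p.1) (ε / 2) ∩
      f ⁻¹' Metric.ball (TopologicalSpace.denseSeq ℝ p.2) (ε / 2))
  have hcov : P ⊆ ⋃ p, A p := by
    intro x hx
    obtain ⟨m, hm⟩ := (TopologicalSpace.denseRange_denseSeq X).exists_dist_lt x (half_pos hε)
    obtain ⟨n, hn⟩ := (TopologicalSpace.denseRange_denseSeq ℝ).exists_dist_lt (f x) (half_pos hε)
    exact Set.mem_iUnion.2 ⟨(m, n), hx, hm, hn⟩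
  obtain ⟨p, hp⟩ : ∃ p, μ (A p) ≠ 0 := by
    by_contra! h
    exact hP.2.2.ne' (measure_mono_null hcov (measure_iUnion_null h))
  have hm : NullMeasurableSet (A p) μ :=
    hP.1.closed.measurableSet.nullMeasurableSet.inter
      (Metric.isOpen_ball.measurableSet.nullMeasurableSet.inter (hf _ Metric.isOpen_ball))
  obtain ⟨D, hD, hDA⟩ := exists_perfPlus_subset hna hm hp
  refine ⟨D, hD, fun x hx => (hDA hx).1, fun x hx y hy => ?_⟩
  obtain ⟨-, hx1, hx2⟩ := hDA hx
  obtain ⟨-, hy1, hy2⟩ := hDA hy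
  have e := add_halves ε
  constructor
  · have := dist_triangle_right x y (TopologicalSpace.denseSeq X p.1)
    rw [Metric.mem_ball] at hx1 hy1
    linarith
  · have := dist_triangle_right (f x) (f y) (TopologicalSpace.denseSeq ℝ p.2)
    rw [Set.mem_preimage, Metric.mem_ball] at hx2 hy2
    linarith

/-- Player II may ignore the points played by Player I: the strategy depends only on the length of
the history and follows a decreasing sequence of sets obtained from `exists_perfPlus_small`. -/
lemma winII [CompleteSpace X] (hna : ∀ x : X, μ {x} = 0) {f : X → ℝ}
    (hf : ∀ U : Set ℝ, IsOpen U → NullMeasurableSet (f ⁻¹' U) μ) :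
    G1WinII (PerfPlus μ) f := by
  have step : ∀ (n : ℕ) (P : Set X), ∃ D : Set X, P ∈ PerfPlus μ →
      D ∈ PerfPlus μ ∧ D ⊆ P ∧
        ∀ x ∈ D, ∀ y ∈ D, dist x y < 1 / ((n : ℝ) + 1) ∧ dist (f x) (f y) < 1 / ((n : ℝ) + 1) := by
    intro n P
    by_cases hP : P ∈ PerfPlus μ
    · obtain ⟨D, h⟩ := exists_perfPlus_small hna hf hP (Nat.one_div_pos_of_nat (α := ℝ) (n := n))
      exact ⟨D, fun _ => h⟩
    · exact ⟨∅, fun h => absurd h hP⟩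
  choose s hs using step
  let K : Set X → ℕ → Set X := fun P n => Nat.rec P (fun n Q => s n Q) n
  refine ⟨fun P h => K P (h.length + 1), fun P hP => ?_⟩
  have hK : ∀ n, K P n ∈ PerfPlus μ := fun n => by
    induction n with
    | zero => exact hP
    | succ n ih => exact (hs n _ ih).1
  have hanti : Antitone (K P) := antitone_nat_of_succ_le fun n => (hs n _ (hK n)).2.1
  have hsmall : ∀ n, ∀ x ∈ K P (n + 1), ∀ y ∈ K P (n + 1),
      dist x y < 1 / ((n : ℝ) + 1) ∧ dist (f x) (f y) < 1 / ((n : ℝ) + 1) :=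
    fun n => (hs n _ (hK n)).2.2
  refine ⟨fun h => ⟨hK (h.length + 1), hanti (Nat.zero_le (h.length + 1))⟩, fun x hx => ?_⟩
  simp only [List.length_ofFn] at hx
  have hmem : ∀ n m, n ≤ m → x m ∈ K P (n + 1) := fun n m hnm =>
    hanti (Nat.succ_le_succ hnm) (hx m)
  have hcau : CauchySeq x := cauchySeq_of_le_tendsto_0 (fun n : ℕ => 1 / ((n : ℝ) + 1))
    (fun m k n hm hk => (hsmall n _ (hmem n m hm) _ (hmem n k hk)).1.le)
    tendsto_one_div_add_atTop_nhds_zero_nat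
  obtain ⟨y, hy⟩ := cauchySeq_tendsto_of_complete hcau
  have hyK : ∀ n, y ∈ K P (n + 1) := fun n =>
    (hK (n + 1)).1.closed.mem_of_tendsto hy
      (eventually_atTop.2 ⟨n, fun m hm => hmem n m hm⟩)
  refine ⟨y, hy, tendsto_iff_dist_tendsto_zero.2 ?_⟩
  exact squeeze_zero (fun _ => dist_nonneg)
    (fun n => (hsmall n _ (hx n) _ (hyK n)).2.le) tendsto_one_div_add_atTop_nhds_zero_nat

/-- Player I starts inside the overlap of the two hulls and then alternates between points with
`f ≤ a` and points with `f ≥ b`, so that the values of `f` cannot converge. -/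
lemma winI (hna : ∀ x : X, μ {x} = 0) {f : X → ℝ}
    (hf : ¬ ∀ U : Set ℝ, IsOpen U → NullMeasurableSet (f ⁻¹' U) μ) :
    G1WinI (PerfPlus μ) f := by
  obtain ⟨a, b, hab, h0⟩ := exists_overlap hf
  obtain ⟨P, hP, hPsub⟩ := exists_perfPlus_subset hna
    ((measurableSet_toMeasurable _ _).inter (measurableSet_toMeasurable _ _)).nullMeasurableSet h0
  have : Nonempty X := hP.2.1.to_type
  let T : ℕ → Set X := fun n => if Even n then f ⁻¹' Set.Iic a else f ⁻¹' Set.Ici b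
  have hpick : ∀ (n : ℕ) (Q : Set X), ∃ x, Q ∈ PerfPlus μ ∧ Q ⊆ P → x ∈ Q ∩ T n := by
    intro n Q
    by_cases hQ : Q ∈ PerfPlus μ ∧ Q ⊆ P
    · obtain ⟨x, hx⟩ : (Q ∩ T n).Nonempty := by
        by_cases hn : Even n
        · simp only [T, if_pos hn]
          exact inter_nonempty_of_subset_toMeasurable hQ.1 fun x hx => (hPsub (hQ.2 hx)).1
        · simp only [T, if_neg hn]
          exact inter_nonempty_of_subset_toMeasurable hQ.1 fun x hx => (hPsub (hQ.2 hx)).2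
      exact ⟨x, fun _ => hx⟩
    · exact ⟨Classical.arbitrary X, fun h => absurd h hQ⟩
  choose t ht using hpick
  refine ⟨P, hP, fun L => t L.length (L.getLastD ∅), fun Q hQ => ?_⟩
  have hτ : ∀ n : ℕ, t (List.ofFn fun i : Fin (n + 1) => Q i.1).length
      ((List.ofFn fun i : Fin (n + 1) => Q i.1).getLastD ∅) = t (n + 1) (Q n) := by
    intro n
    rw [List.length_ofFn, List.ofFn_succ_last, List.getLastD_concat]
    rfl
  simp only [hτ]
  have hx : ∀ n, t (n + 1) (Q n) ∈ Q n ∩ T (n + 1) := fun n => ht _ _ (hQ n)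
  refine ⟨fun n => (hx n).1, ?_⟩
  rintro ⟨y, -, hy⟩
  have hge : b ≤ f y := by
    refine ge_of_tendsto' (hy.comp (tendsto_id.const_mul_atTop' two_pos)) fun k => ?_
    have h := (hx (2 * k)).2
    simp only [T, if_neg (Nat.not_even_two_mul_add_one k)] at h
    exact h
  have hle : f y ≤ a := by
    refine le_of_tendsto' (hy.comp (tendsto_add_atTop_nat 1 |>.comp
      (tendsto_id.const_mul_atTop' two_pos))) fun k => ?_
    have h := (hx (2 * k + 1)).2
    have he : Even (2 * k + 1 + 1) := ⟨k + 1, by ring⟩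
    simp only [T, if_pos he] at h
    exact h
  linarith

end MeasureGame

/-- Let `X` be a Polish space (here: a complete separable metric space) without isolated
points, `μ` a finite nonatomic Borel measure on `X`, and `S = Perf⁺` the family of nonempty
perfect subsets of positive measure. The game `G₁(S, f)` is determined; if `f` is measurable
with respect to the completion of `μ` then Player II has a winning strategy, and otherwise
Player I has a winning strategy. -/
theorem game_measure_characterization {X : Type*} [MetricSpace X] [CompleteSpace X]
    [TopologicalSpace.SeparableSpace X] [MeasurableSpace X] [BorelSpace X]
    (hiso : ∀ x : X, (nhdsWithin x {x}ᶜ).NeBot)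
    (μ : MeasureTheory.Measure X) [MeasureTheory.IsFiniteMeasure μ]
    (hna : ∀ x : X, μ {x} = 0) (f : X → ℝ) :
    (G1WinI (PerfPlus μ) f ∨ G1WinII (PerfPlus μ) f) ∧
    ((∀ U : Set ℝ, IsOpen U → MeasureTheory.NullMeasurableSet (f ⁻¹' U) μ) →
      G1WinII (PerfPlus μ) f) ∧
    (¬ (∀ U : Set ℝ, IsOpen U → MeasureTheory.NullMeasurableSet (f ⁻¹' U) μ) →
      G1WinI (PerfPlus μ) f) := by
  exact ⟨(em _).elim (fun h => Or.inr (MeasureGame.winII hna h))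
    fun h => Or.inl (MeasureGame.winI hna h), MeasureGame.winII hna, MeasureGame.winI hna⟩
end

section
/- Let X be a Polish space without isolated points, Σ = G_Res, and f : X → ℝ. Then the game G_1(Σ,f) is determined; moreover, if f is Baire measurable then Player II has a winning strategy in G_1(Σ,f), and if f is not Baire measurable then Player I has a winning strategy in G_1(Σ,f). -/
/-!
Both implications pass through one property of `f`: continuity of its restriction to a residual
set. If `f` is Baire measurable it has this property (`exists_residual_continuousOn`), and
Player II wins by fixing a point `y` of `P` in a `Gδ` residual set `G` of continuity and playing
the sets `P ∩ G ∩ ball y (1 / (n + 1))`.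

If `f` has no such residual set, there are reals `a < b` and a nonempty open set `W` such that
both `{f ≤ a}` and `{b ≤ f}` are nonmeager in every nonempty open subset of `W`
(`exists_oscillation`). Player I then plays `W` and answers with points whose values lie
alternately below `a` and above `b`, so that the values do not converge. If `f` is not Baire
measurable, it is not continuous on any residual set (`baireMeasurable_of_continuousOn`).
-/

open Filter Topology

/-- Every open preimage agrees with an open set off a meager set; doing this for a countable
basis of `ℝ` gives a residual set on which `f` is continuous. -/
lemma exists_residual_continuousOn {X : Type*} [TopologicalSpace X] {f : X → ℝ}
    (hf : BaireMeasurableFun f) : ∃ G ∈ residual X, ContinuousOn f G := by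
  have hB : ∀ U : TopologicalSpace.countableBasis ℝ, ∃ O : Set X,
      IsOpen O ∧ IsMeagre (symmDiff (f ⁻¹' U.1) O) := fun U =>
    hf U.1 (TopologicalSpace.isOpen_of_mem_countableBasis U.2)
  choose O hO hM using hB
  have : Countable (TopologicalSpace.countableBasis ℝ) :=
    (TopologicalSpace.countable_countableBasis ℝ).to_subtype
  refine ⟨(⋃ U, symmDiff (f ⁻¹' U.1) (O U))ᶜ, isMeagre_iUnion hM, ?_⟩
  intro x hx
  refine ((TopologicalSpace.isBasis_countableBasis ℝ).nhds_hasBasis).tendsto_right_iff.2 ?_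
  rintro U ⟨hU, hxU⟩
  simp only [Set.mem_compl_iff, Set.mem_iUnion, not_exists, Set.mem_symmDiff] at hx
  have hxO : x ∈ O ⟨U, hU⟩ := by
    by_contra h
    exact hx ⟨U, hU⟩ (Or.inl ⟨hxU, h⟩)
  filter_upwards [self_mem_nhdsWithin, mem_nhdsWithin_of_mem_nhds ((hO ⟨U, hU⟩).mem_nhds hxO)]
    with z hz hzO
  simp only [Set.mem_compl_iff, Set.mem_iUnion, not_exists, Set.mem_symmDiff] at hz
  by_contra h
  exact hz ⟨U, hU⟩ (Or.inr ⟨hzO, h⟩)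

lemma baireMeasurable_of_continuousOn {X : Type*} [TopologicalSpace X] {f : X → ℝ}
    {G : Set X} (hG : G ∈ residual X) (hf : ContinuousOn f G) : BaireMeasurableFun f := by
  intro U hU
  obtain ⟨O, hO, hOG⟩ := continuousOn_iff'.1 hf U hU
  refine ⟨O, hO, ?_⟩
  have hGc : IsMeagre Gᶜ := by simpa [IsMeagre] using hG
  refine hGc.mono ?_
  intro x hx hxG
  have := Set.ext_iff.1 hOG x
  simp only [Set.mem_inter_iff, hxG, and_true] at this
  rcases hx with ⟨h1, h2⟩ | ⟨h1, h2⟩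
  · exact h2 (this.1 h1)
  · exact h2 (this.2 h1)

/-- The largest open set in which `s` is meager, as a union of basic open sets. -/
def meagerPart {X : Type*} [TopologicalSpace X] [SecondCountableTopology X] (s : Set X) : Set X :=
  ⋃ u : {u : Set X // u ∈ TopologicalSpace.countableBasis X ∧ IsMeagre (s ∩ u)}, u.1

lemma isOpen_meagerPart {X : Type*} [TopologicalSpace X] [SecondCountableTopology X]
    (s : Set X) : IsOpen (meagerPart s) :=
  isOpen_iUnion fun u => TopologicalSpace.isOpen_of_mem_countableBasis u.2.1

lemma isMeagre_inter_meagerPart {X : Type*} [TopologicalSpace X] [SecondCountableTopology X]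
    (s : Set X) : IsMeagre (s ∩ meagerPart s) := by
  have : Countable {u : Set X // u ∈ TopologicalSpace.countableBasis X ∧ IsMeagre (s ∩ u)} :=
    ((TopologicalSpace.countable_countableBasis X).mono fun _ h => h.1).to_subtype
  rw [meagerPart, Set.inter_iUnion]
  exact isMeagre_iUnion fun u => u.2.2

lemma subset_meagerPart {X : Type*} [TopologicalSpace X] [SecondCountableTopology X]
    {s V : Set X} (hV : IsOpen V) (h : IsMeagre (s ∩ V)) : V ⊆ meagerPart s := by
  intro x hx
  obtain ⟨u, hu, hxu, huV⟩ :=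
    (TopologicalSpace.isBasis_countableBasis X).exists_subset_of_mem_open hx hV
  exact Set.mem_iUnion.2 ⟨⟨u, hu, h.mono (Set.inter_subset_inter_right _ huV)⟩, hxu⟩

/-- If no residual set of continuity exists, `f` oscillates across some gap `(a, b)` in the sense
of category, everywhere in some open set. Otherwise, for all rationals `a < b` the sets
`meagerPart {f ≤ a}` and `meagerPart {b ≤ f}` have dense union, and almost every point `x`
lying in them satisfies `a < f x`, respectively `f x < b`; at such points `f` is continuous. -/
lemma exists_oscillation {X : Type*} [TopologicalSpace X] [SecondCountableTopology X]
    {f : X → ℝ} (hf : ¬ ∃ G ∈ residual X, ContinuousOn f G) :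
    ∃ a b : ℝ, a < b ∧ ∃ W : Set X, IsOpen W ∧ W.Nonempty ∧
      ∀ V ⊆ W, IsOpen V → V.Nonempty →
        ¬ IsMeagre ({x | f x ≤ a} ∩ V) ∧ ¬ IsMeagre ({x | b ≤ f x} ∩ V) := by
  by_contra hcon
  push Not at hcon
  apply hf
  let A : ℚ → Set X := fun a => meagerPart {x | f x ≤ a}
  let B : ℚ → Set X := fun b => meagerPart {x | (b : ℝ) ≤ f x}
  have h1 : ∀ᶠ x in residual X, ∀ p : {p : ℚ × ℚ // p.1 < p.2}, x ∈ A p.1.1 ∪ B p.1.2 := by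
    refine eventually_countable_forall.2 fun p => ?_
    refine residual_of_dense_open ((isOpen_meagerPart _).union (isOpen_meagerPart _)) ?_
    rw [dense_iff_inter_open]
    intro W hW hWne
    obtain ⟨V, hVW, hV, ⟨x, hx⟩, h⟩ := hcon p.1.1 p.1.2 (by exact_mod_cast p.2) W hW hWne
    refine ⟨x, hVW hx, ?_⟩
    by_cases hm : IsMeagre ({x | f x ≤ (p.1.1 : ℝ)} ∩ V)
    · exact Or.inl (subset_meagerPart hV hm hx)
    · exact Or.inr (subset_meagerPart hV (h hm) hx)
  have h2 : ∀ᶠ x in residual X, ∀ a : ℚ, x ∈ A a → (a : ℝ) < f x := by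
    refine eventually_countable_forall.2 fun a => ?_
    have h : ∀ᶠ x in residual X, x ∈ ({x | f x ≤ (a : ℝ)} ∩ A a)ᶜ := isMeagre_inter_meagerPart _
    filter_upwards [h] with x hx hxA
    by_contra hle
    exact hx ⟨not_lt.1 hle, hxA⟩
  have h3 : ∀ᶠ x in residual X, ∀ b : ℚ, x ∈ B b → f x < b := by
    refine eventually_countable_forall.2 fun b => ?_
    have h : ∀ᶠ x in residual X, x ∈ ({x | (b : ℝ) ≤ f x} ∩ B b)ᶜ := isMeagre_inter_meagerPart _
    filter_upwards [h] with x hx hxB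
    by_contra hle
    exact hx ⟨not_lt.1 hle, hxB⟩
  refine ⟨_, h1.and (h2.and h3), ?_⟩
  rintro x ⟨hx1, hx2, hx3⟩
  refine tendsto_order.2 ⟨fun c hc => ?_, fun c hc => ?_⟩
  · obtain ⟨b, hb, hb'⟩ := exists_rat_btwn hc
    obtain ⟨a, ha, ha'⟩ := exists_rat_btwn hb
    have hxA : x ∈ A a := by
      rcases hx1 ⟨(a, b), by exact_mod_cast ha'⟩ with h | h
      · exact h
      · exact absurd (hx3 b h) (not_lt.2 hb'.le)
    filter_upwards [self_mem_nhdsWithin,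
      mem_nhdsWithin_of_mem_nhds ((isOpen_meagerPart _).mem_nhds hxA)] with z hz hzA
    exact ha.trans (hz.2.1 a hzA)
  · obtain ⟨a, ha, ha'⟩ := exists_rat_btwn hc
    obtain ⟨b, hb, hb'⟩ := exists_rat_btwn ha'
    have hxB : x ∈ B b := by
      rcases hx1 ⟨(a, b), by exact_mod_cast hb⟩ with h | h
      · exact absurd (hx2 a h) (not_lt.2 ha.le)
      · exact h
    filter_upwards [self_mem_nhdsWithin,
      mem_nhdsWithin_of_mem_nhds ((isOpen_meagerPart _).mem_nhds hxB)] with z hz hzB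
    exact (hz.2.2 b hzB).trans hb'

/-- A `GRes` set inside `W` meets every set that is nonmeager in each open part of `W`. -/
lemma GRes_inter_nonempty {X : Type*} [TopologicalSpace X] [BaireSpace X] {W Q s : Set X}
    (hW : IsOpen W) (hs : ∀ V ⊆ W, IsOpen V → V.Nonempty → ¬ IsMeagre (s ∩ V))
    (hQ : Q ∈ GRes X) (hQW : Q ⊆ W) : ∃ x ∈ Q, x ∈ s := by
  obtain ⟨-, U, hU, hUne, hQU, hm⟩ := hQ
  have hQne : Q.Nonempty := by
    by_contra h
    rw [Set.not_nonempty_iff_eq_empty] at h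
    subst h
    rw [Set.sdiff_empty] at hm
    exact not_isMeagre_of_isOpen hU hUne hm
  obtain ⟨q, hq⟩ := hQne
  by_contra! h
  refine hs (U ∩ W) Set.inter_subset_right (hU.inter hW) ⟨q, hQU hq, hQW hq⟩ (hm.mono ?_)
  rintro x ⟨hxs, hxU, -⟩
  exact ⟨hxU, fun hxQ => h x hxQ hxs⟩

lemma winII_of_continuousOn {X : Type*} [MetricSpace X] [BaireSpace X] {f : X → ℝ}
    {G : Set X} (hG : G ∈ residual X) (hf : ContinuousOn f G) : G1WinII (GRes X) f := by
  obtain ⟨D, hDG, hD, hDd⟩ := mem_residual.1 hG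
  have hDc : IsMeagre Dᶜ := by
    simpa [IsMeagre] using residual_of_dense_Gδ hD hDd
  have hne : ∀ P ∈ GRes X, ∃ y, y ∈ P ∩ D := by
    rintro P ⟨-, U, hU, hUne, -, hm⟩
    by_contra! h
    refine not_isMeagre_of_isOpen hU hUne ((hm.union hDc).mono fun x hx => ?_)
    by_cases hxP : x ∈ P
    · exact Or.inr fun hxD => h x ⟨hxP, hxD⟩
    · exact Or.inl ⟨hx, hxP⟩
  rcases isEmpty_or_nonempty X with hX | hX
  · refine ⟨fun P _ => P, fun P hP => ?_⟩
    exact (hne P hP).elim fun y _ => hX.elim y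
  choose! y hy using hne
  refine ⟨fun P h => P ∩ D ∩ Metric.ball (y P) (1 / ((h.length : ℝ) + 1)), fun P hP => ⟨?_, ?_⟩⟩
  · intro h
    refine ⟨⟨(hP.1.inter hD).inter Metric.isOpen_ball.isGδ, ?_⟩, fun x hx => hx.1.1⟩
    obtain ⟨U, hU, -, hPU, hm⟩ := hP.2
    refine ⟨U ∩ Metric.ball (y P) (1 / ((h.length : ℝ) + 1)), hU.inter Metric.isOpen_ball,
      ⟨y P, hPU (hy P hP).1, Metric.mem_ball_self (by positivity)⟩,
      fun x hx => ⟨hPU hx.1.1, hx.2⟩, (hm.union hDc).mono ?_⟩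
    rintro x ⟨⟨hxU, hxb⟩, hx⟩
    by_cases hxP : x ∈ P
    · exact Or.inr fun hxD => hx ⟨⟨hxP, hxD⟩, hxb⟩
    · exact Or.inl ⟨hxU, hxP⟩
  · intro x hx
    have hlim : Tendsto x atTop (𝓝 (y P)) := by
      rw [tendsto_iff_dist_tendsto_zero]
      refine squeeze_zero (fun _ => dist_nonneg) (fun n => ?_)
        (tendsto_one_div_add_atTop_nhds_zero_nat (𝕜 := ℝ))
      simpa using (Metric.mem_ball.1 (hx n).2).le
    refine ⟨y P, hlim, (hf (y P) (hDG (hy P hP).2)).tendsto.comp ?_⟩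
    exact tendsto_nhdsWithin_iff.2 ⟨hlim, Eventually.of_forall fun n => hDG (hx n).1.2⟩

lemma winI_of_oscillation {X : Type*} [MetricSpace X] [BaireSpace X] {f : X → ℝ}
    {a b : ℝ} (hab : a < b) {W : Set X} (hW : IsOpen W) (hWne : W.Nonempty)
    (h : ∀ V ⊆ W, IsOpen V → V.Nonempty →
        ¬ IsMeagre ({x | f x ≤ a} ∩ V) ∧ ¬ IsMeagre ({x | b ≤ f x} ∩ V)) :
    G1WinI (GRes X) f := by
  have : Nonempty X := ⟨hWne.some⟩
  refine ⟨W, ⟨hW.isGδ, W, hW, hWne, subset_rfl, by simpa using IsMeagre.empty⟩,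
    fun L => Classical.epsilon fun x =>
      x ∈ L.getLastD ∅ ∧ if Even L.length then f x ≤ a else b ≤ f x, fun Q hQ => ?_⟩
  have key : ∀ n, ∃ x, x ∈ Q n ∧ if Even (n + 1) then f x ≤ a else b ≤ f x := by
    intro n
    split_ifs
    · exact GRes_inter_nonempty hW (fun V h1 h2 h3 => (h V h1 h2 h3).1) (hQ n).1 (hQ n).2
    · exact GRes_inter_nonempty hW (fun V h1 h2 h3 => (h V h1 h2 h3).2) (hQ n).1 (hQ n).2
  have hlast : ∀ n, (List.ofFn fun i : Fin (n + 1) => Q i.1).getLastD ∅ = Q n := by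
    intro n
    rw [List.ofFn_succ_last]
    simp
  simp only [hlast, List.length_ofFn]
  have hτ := fun n => Classical.epsilon_spec (key n)
  refine ⟨fun n => (hτ n).1, ?_⟩
  rintro ⟨y, -, hy⟩
  -- The odd-indexed values are at most `a` and the even-indexed ones at least `b`.
  have hodd : f y ≤ a := by
    refine le_of_tendsto (hy.comp (tendsto_atTop_mono (fun n => (by lia : n ≤ 2 * n + 1))
      tendsto_id)) (Eventually.of_forall fun n => ?_)
    have := (hτ (2 * n + 1)).2
    rwa [if_pos ⟨n + 1, by ring⟩] at this
  have heven : b ≤ f y := by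
    refine ge_of_tendsto (hy.comp (tendsto_atTop_mono (fun n => (by lia : n ≤ 2 * n))
      tendsto_id)) (Eventually.of_forall fun n => ?_)
    have := (hτ (2 * n)).2
    rwa [if_neg (by simp)] at this
  linarith

/-- Let `X` be a Polish space (here: a complete separable metric space) without isolated
points and `S = GRes X`. The game `G₁(S, f)` is determined; if `f` is Baire measurable then
Player II has a winning strategy, and otherwise Player I has a winning strategy. -/
theorem game_baire_characterization {X : Type*} [MetricSpace X] [CompleteSpace X]
    [TopologicalSpace.SeparableSpace X]
    (hiso : ∀ x : X, (nhdsWithin x {x}ᶜ).NeBot) (f : X → ℝ) :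
    (G1WinI (GRes X) f ∨ G1WinII (GRes X) f) ∧
    (BaireMeasurableFun f → G1WinII (GRes X) f) ∧
    (¬ BaireMeasurableFun f → G1WinI (GRes X) f) := by
  have hII : BaireMeasurableFun f → G1WinII (GRes X) f := fun hf => by
    obtain ⟨G, hG, hfG⟩ := exists_residual_continuousOn hf
    exact winII_of_continuousOn hG hfG
  have hI : ¬ BaireMeasurableFun f → G1WinI (GRes X) f := fun hf => by
    have := UniformSpace.secondCountable_of_separable X
    obtain ⟨a, b, hab, W, hW, hWne, h⟩ := exists_oscillation (f := f)
      fun ⟨G, hG, hfG⟩ => hf (baireMeasurable_of_continuousOn hG hfG)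
    exact winI_of_oscillation hab hW hWne h
  exact ⟨(em (BaireMeasurableFun f)).symm.imp hI hII, hII, hI⟩
end

section
/- Let X be a regular (T₃) topological space. A function f : X → ℝ is cliquish if and only if for every ε > 0 and every nonempty open set W ⊆ X there exists a nonempty open set U ⊆ W with diam f(cl(U)) < ε. -/
/-!
In a regular space every nonempty open `V` contains a nonempty open set whose closure lies in
`V`, so the two conditions differ only by shrinking the witness; `diam` is monotone, which
settles both directions.
-/

open Filter Topology

/-- `f : X → ℝ` is cliquish: for every nonempty open `W ⊆ X` and every `ε > 0` there is a
nonempty open `U ⊆ W` with `diam (f '' U) < ε` (extended-real diameter). -/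
def Cliquish {X : Type*} [TopologicalSpace X] (f : X → ℝ) : Prop :=
  ∀ W : Set X, IsOpen W → W.Nonempty → ∀ ε : ℝ, 0 < ε →
    ∃ U : Set X, IsOpen U ∧ U.Nonempty ∧ U ⊆ W ∧ EMetric.diam (f '' U) < ENNReal.ofReal ε

/-- In a regular (T₃) space, `f : X → ℝ` is cliquish iff for every `ε > 0` and every
nonempty open `W ⊆ X` there is a nonempty open `U ⊆ W` with `diam (f '' closure U) < ε`. -/
theorem cliquish_iff_closure {X : Type*} [TopologicalSpace X] [T3Space X] (f : X → ℝ) :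
    Cliquish f ↔ ∀ ε : ℝ, 0 < ε → ∀ W : Set X, IsOpen W → W.Nonempty →
      ∃ U : Set X, IsOpen U ∧ U.Nonempty ∧ U ⊆ W ∧
        EMetric.diam (f '' closure U) < ENNReal.ofReal ε := by
  constructor
  · intro h ε hε W hW hWne
    obtain ⟨V, hV, ⟨x, hx⟩, hVW, hd⟩ := h W hW hWne ε hε
    -- Regularity shrinks `V` to an open neighbourhood of `x` whose closure is still inside `V`.
    obtain ⟨K, hK, hKc, hKV⟩ := exists_mem_nhds_isClosed_subset (hV.mem_nhds hx)
    have hcl : closure (interior K) ⊆ V :=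
      (closure_minimal interior_subset hKc).trans hKV
    exact ⟨interior K, isOpen_interior, ⟨x, mem_interior_iff_mem_nhds.2 hK⟩,
      subset_closure.trans (hcl.trans hVW),
      (Metric.ediam_mono (Set.image_mono hcl)).trans_lt hd⟩
  · intro h W hW hWne ε hε
    obtain ⟨U, hU, hUne, hUW, hd⟩ := h ε hε W hW hWne
    exact ⟨U, hU, hUne, hUW,
      (Metric.ediam_mono (Set.image_mono subset_closure)).trans_lt hd⟩
end

section
/- Let (X,d) be a complete metric space, Σ = CLO(X) the family of all closed subsets of X with nonempty interior, and f : X → ℝ. Then the game G_1(Σ,f) is determined; moreover, if f is cliquish then Player II has a winning strategy in G_1(Σ,f), and if f is not cliquish then Player I has a winning strategy in G_1(Σ,f). -/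
/-! If `f` is cliquish, then for each `ε > 0` the union of the open sets on which `f` oscillates by
less than `ε` is open and dense, so by Baire the continuity points of `f` are dense
(`Cliquish.exists_continuousAt`). Player II picks a continuity point `y` in the interior of the
initial set and answers with closed balls around `y` whose radii tend to `0`: any sequence of points
taken from them tends to `y`, and its `f`-values tend to `f y`.

If `f` is not cliquish, some nonempty open `W` and `ε > 0` are such that `f` oscillates by at least
`ε` on every nonempty open subset of `W`. Player I starts with a closed ball inside `W`. Each later
set of Player II then contains a point whose `f`-value is at distance at least `ε / 3` from that of
the previously played point; playing such points makes the sequence of `f`-values non-Cauchy. -/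

open Filter Topology

/-- `CLO X` is the family of all closed subsets of `X` with nonempty interior. -/
def CLO (X : Type*) [TopologicalSpace X] : Set (Set X) :=
  {P : Set X | IsClosed P ∧ (interior P).Nonempty}

lemma Cliquish.exists_continuousAt {X : Type*} [MetricSpace X] [CompleteSpace X]
    {f : X → ℝ} (hf : Cliquish f) {W : Set X} (hW : IsOpen W) (hne : W.Nonempty) :
    ∃ y ∈ W, ContinuousAt f y := by
  let V : ℕ → Set X := fun k =>
    ⋃₀ {U | IsOpen U ∧ Metric.ediam (f '' U) < ENNReal.ofReal (1 / ((k : ℝ) + 1))}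
  have hVo : ∀ k, IsOpen (V k) := fun k => isOpen_sUnion fun U hU => hU.1
  have hVd : ∀ k, Dense (V k) := by
    intro k
    rw [dense_iff_inter_open]
    intro O hO hOne
    obtain ⟨U, hUo, ⟨z, hz⟩, hUO, hd⟩ := hf O hO hOne (1 / ((k : ℝ) + 1)) (by positivity)
    exact ⟨z, hUO hz, U, ⟨hUo, hd⟩, hz⟩
  obtain ⟨y, hyW, hy⟩ := (dense_iInter_of_isOpen hVo hVd).inter_open_nonempty W hW hne
  refine ⟨y, hyW, ?_⟩
  rw [Metric.continuousAt_iff']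
  intro ε hε
  obtain ⟨k, hk⟩ := exists_nat_one_div_lt hε
  obtain ⟨U, ⟨hUo, hd⟩, hyU⟩ := Set.mem_iInter.1 hy k
  filter_upwards [hUo.mem_nhds hyU] with z hz
  have h1 : edist (f z) (f y) < ENNReal.ofReal (1 / ((k : ℝ) + 1)) :=
    (Metric.edist_le_ediam_of_mem (Set.mem_image_of_mem f hz)
      (Set.mem_image_of_mem f hyU)).trans_lt hd
  rw [edist_lt_ofReal] at h1
  exact h1.trans hk

lemma Cliquish.g1WinII {X : Type*} [MetricSpace X] [CompleteSpace X]
    {f : X → ℝ} (hf : Cliquish f) : G1WinII (CLO X) f := by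
  have key : ∀ P : Set X, ∃ g : ℕ → Set X, P ∈ CLO X →
      (∀ n, g n ∈ CLO X ∧ g n ⊆ P) ∧
      ∀ x : ℕ → X, (∀ n, x n ∈ g n) → ∃ y : X, Tendsto x atTop (nhds y) ∧
          Tendsto (fun n => f (x n)) atTop (nhds (f y)) := by
    intro P
    by_cases hP : P ∈ CLO X
    · obtain ⟨y, hyP, hy⟩ := hf.exists_continuousAt isOpen_interior hP.2
      obtain ⟨r, hr, hrP⟩ := Metric.nhds_basis_closedBall.mem_iff.1
        (mem_interior_iff_mem_nhds.1 hyP)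
      refine ⟨fun n => Metric.closedBall y (min r (1 / ((n : ℝ) + 1))), fun _ => ⟨fun n => ?_, ?_⟩⟩
      · have hpos : 0 < min r (1 / ((n : ℝ) + 1)) := lt_min hr (by positivity)
        refine ⟨⟨Metric.isClosed_closedBall, y, ?_⟩, ?_⟩
        · exact Metric.ball_subset_interior_closedBall (Metric.mem_ball_self hpos)
        · exact (Metric.closedBall_subset_closedBall (min_le_left _ _)).trans hrP
      · intro x hx
        have hxy : Tendsto x atTop (nhds y) := by
          rw [tendsto_iff_dist_tendsto_zero]
          exact squeeze_zero (fun _ => dist_nonneg)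
            (fun n => (Metric.mem_closedBall.1 (hx n)).trans (min_le_right _ _))
            tendsto_one_div_add_atTop_nhds_zero_nat
        exact ⟨y, hxy, hy.tendsto.comp hxy⟩
    · exact ⟨fun _ => ∅, fun h => absurd h hP⟩
  choose g hg using key
  refine ⟨fun P h => g P h.length, fun P hP => ⟨fun h => (hg P hP).1 _, fun x hx => ?_⟩⟩
  exact (hg P hP).2 x fun n => by simpa using hx n

lemma g1WinI_of_not_cliquish {X : Type*} [MetricSpace X]
    {f : X → ℝ} (hf : ¬ Cliquish f) : G1WinI (CLO X) f := by
  unfold Cliquish at hf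
  push Not at hf
  obtain ⟨W, hW, ⟨w, hw⟩, ε, hε, hosc⟩ := hf
  obtain ⟨r, hr, hrW⟩ := Metric.nhds_basis_closedBall.mem_iff.1 (hW.mem_nhds hw)
  have key : ∀ (x : X) (Q : Set X), ∃ z : X, Q ∈ CLO X → Q ⊆ Metric.closedBall w r →
      z ∈ Q ∧ ε / 3 ≤ dist (f z) (f x) := by
    intro x Q
    by_contra! hcon
    obtain ⟨hQ, hQP, -⟩ := hcon x
    have hlt : ∀ z ∈ Q, dist (f z) (f x) < ε / 3 := fun z hz => (hcon z).2.2 hz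
    have h1 := hosc (interior Q) isOpen_interior hQ.2 (interior_subset.trans (hQP.trans hrW))
    have h2 : Metric.ediam (f '' interior Q) ≤ ENNReal.ofReal (2 * (ε / 3)) := by
      refine Metric.ediam_le ?_
      rintro _ ⟨a, ha, rfl⟩ _ ⟨b, hb, rfl⟩
      rw [edist_dist]
      apply ENNReal.ofReal_le_ofReal
      have ha' := hlt a (interior_subset ha)
      have hb' := hlt b (interior_subset hb)
      have := dist_triangle_right (f a) (f b) (f x)
      linarith
    have h3 := (ENNReal.ofReal_le_ofReal_iff (by positivity)).1 (h1.trans h2)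
    linarith
  choose step hstep using key
  refine ⟨Metric.closedBall w r, ⟨Metric.isClosed_closedBall, w, ?_⟩,
    -- Folding lets the strategy recompute the previous point from the sets played so far.
    fun l => l.foldl step w, fun Q hQ => ?_⟩
  · exact Metric.ball_subset_interior_closedBall (Metric.mem_ball_self hr)
  have hrec : ∀ n : ℕ, (List.ofFn fun i : Fin (n + 1) => Q i.1).foldl step w =
      step ((List.ofFn fun i : Fin n => Q i.1).foldl step w) (Q n) := by
    intro n
    rw [List.ofFn_succ', List.concat_eq_append, List.foldl_append]
    rfl
  refine ⟨fun n => ?_, ?_⟩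
  · simp only [hrec n]
    exact (hstep _ _ (hQ n).1 (hQ n).2).1
  · rintro ⟨y, -, hy⟩
    obtain ⟨N, hN⟩ := Metric.cauchySeq_iff.1 hy.cauchySeq (ε / 3) (by positivity)
    have h1 := hN (N + 1) (by simp) N le_rfl
    simp only [hrec (N + 1)] at h1
    exact absurd h1 (not_lt.2 (hstep _ _ (hQ (N + 1)).1 (hQ (N + 1)).2).2)

/-- Let `X` be a complete metric space and `S = CLO X` the family of closed sets with
nonempty interior. The game `G₁(S, f)` is determined; if `f` is cliquish then Player II has
a winning strategy, and otherwise Player I has a winning strategy. -/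
theorem game_cliquish_characterization {X : Type*} [MetricSpace X] [CompleteSpace X]
    (f : X → ℝ) :
    (G1WinI (CLO X) f ∨ G1WinII (CLO X) f) ∧
    (Cliquish f → G1WinII (CLO X) f) ∧
    (¬ Cliquish f → G1WinI (CLO X) f) := by
  refine ⟨?_, Cliquish.g1WinII, g1WinI_of_not_cliquish⟩
  by_cases hf : Cliquish f
  · exact Or.inr hf.g1WinII
  · exact Or.inl (g1WinI_of_not_cliquish hf)
end

section
/- Let (X,d) be a metric space and f : X → ℝ. Then f has the HCRP with respect to CLO(X) if and only if the interior of the set C(f) of continuity points of f is dense in X. -/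
/-!
On an open set, continuity of the restriction of `f` is continuity of `f` at each point of that set.
Hence if `f` is continuous on `Q`, then `interior Q` lies in the interior of `C(f)`; conversely `f` is
continuous on every subset of `C(f)`. Both directions then follow from regularity of `X`: every
neighbourhood of a point contains a closed neighbourhood of it.
-/

open Filter Topology

/-- For a metric space `X` and `f : X → ℝ`, `f` has the HCRP with respect to `CLO X` iff the
interior of the set of continuity points of `f` is dense in `X`. -/
theorem HCRP_CLO_iff_dense_interior {X : Type*} [MetricSpace X] (f : X → ℝ) :
    HCRP f (CLO X) ↔ Dense (interior {x : X | ContinuousAt f x}) := by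
  constructor
  · intro h
    rw [dense_iff_inter_open]
    rintro U hU ⟨x, hx⟩
    -- By regularity, shrink `U` to a closed neighbourhood `P` of `x`.
    obtain ⟨P, hPx, hPc, hPU⟩ := exists_mem_nhds_isClosed_subset (hU.mem_nhds hx)
    obtain ⟨Q, ⟨-, y, hy⟩, hQP, hQ⟩ := h P ⟨hPc, x, mem_interior_iff_mem_nhds.2 hPx⟩
    refine ⟨y, hPU (hQP (interior_subset hy)), ?_⟩
    exact interior_maximal
      (fun z hz => hQ.continuousAt (mem_interior_iff_mem_nhds.1 hz)) isOpen_interior hy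
  · rintro h P ⟨-, hP⟩
    obtain ⟨x, hxP, hxC⟩ := h.inter_open_nonempty _ isOpen_interior hP
    obtain ⟨Q, hQx, hQc, hQ⟩ := exists_mem_nhds_isClosed_subset
      ((isOpen_interior.inter isOpen_interior).mem_nhds ⟨hxP, hxC⟩)
    refine ⟨Q, ⟨hQc, x, mem_interior_iff_mem_nhds.2 hQx⟩,
      fun z hz => interior_subset (hQ hz).1, fun z hz => ?_⟩
    have hz' : ContinuousAt f z :=
      interior_subset (s := {x : X | ContinuousAt f x}) (hQ hz).2
    exact hz'.continuousWithinAt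
end

section
/- Let q : ℕ → ℚ (with ℕ starting at 1) be a bijective enumeration of the rationals, and define f : ℝ → ℝ by f(q_n) = 1/n for each n and f(x) = 0 for every irrational x. Then the set C(f) of continuity points of f is exactly ℝ ∖ ℚ; consequently C(f) is dense in ℝ (so f is cliquish), but the interior of C(f) is empty, so f does not have the HCRP with respect to CLO(ℝ). -/
/-!
Only finitely many rationals carry a value `1 / n` above a given `ε`, and an irrational point has
a neighbourhood avoiding them; hence `f` is continuous there
(`continuousAt_of_irrational`). At a rational point `f` is positive although it vanishes on the
dense set of irrationals, so it is discontinuous (`not_continuousAt_ratCast`).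

The other claims follow from the topology of `ℝ`. Irrationals are dense, and a function with a
dense set of continuity points is cliquish (`cliquish_of_dense_continuousAt`). Rationals are dense
too, so the set of continuity points has empty interior; a function continuous on a set `Q` with
nonempty interior would be continuous at every point of that interior (`not_hcrp_CLO`).
-/

open Filter Topology

/-- A neighbourhood of a continuity point, inside the given open set, has small image. -/
theorem cliquish_of_dense_continuousAt {X : Type*} [TopologicalSpace X] {f : X → ℝ}
    (h : Dense {x : X | ContinuousAt f x}) : Cliquish f := by
  intro W hW hWne ε hε
  obtain ⟨x, hxW, hx⟩ := h.inter_open_nonempty W hW hWne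
  have hx' : ContinuousAt f x := hx
  have hmem : f ⁻¹' Metric.ball (f x) (ε / 4) ∩ W ∈ 𝓝 x :=
    inter_mem (hx'.preimage_mem_nhds (Metric.ball_mem_nhds _ (by positivity))) (hW.mem_nhds hxW)
  obtain ⟨U, hU, hUo, hxU⟩ := mem_nhds_iff.1 hmem
  refine ⟨U, hUo, ⟨x, hxU⟩, fun y hy => (hU hy).2, ?_⟩
  refine lt_of_le_of_lt (b := ENNReal.ofReal (ε / 2)) ?_
    ((ENNReal.ofReal_lt_ofReal_iff hε).2 (by linarith))
  refine Metric.ediam_le_iff.2 ?_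
  rintro _ ⟨a, ha, rfl⟩ _ ⟨b, hb, rfl⟩
  rw [edist_dist]
  refine ENNReal.ofReal_le_ofReal ?_
  have h1 : dist (f a) (f x) < ε / 4 := (hU ha).1
  have h2 : dist (f b) (f x) < ε / 4 := (hU hb).1
  linarith [dist_triangle_right (f a) (f b) (f x)]

/-- A continuous restriction to `Q` yields genuine continuity on the interior of `Q`. -/
theorem not_hcrp_CLO {X : Type*} [TopologicalSpace X] [Nonempty X] {f : X → ℝ}
    (h : interior {x : X | ContinuousAt f x} = ∅) : ¬ HCRP f (CLO X) := by
  intro hH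
  obtain ⟨Q, ⟨-, x, hx⟩, -, hQ⟩ := hH Set.univ ⟨isClosed_univ, by simp⟩
  have hsub : interior Q ⊆ interior {x : X | ContinuousAt f x} :=
    interior_maximal (fun y hy => hQ.continuousAt (mem_interior_iff_mem_nhds.1 hy))
      isOpen_interior
  rw [h] at hsub
  exact hsub hx

theorem continuousAt_of_irrational {q : ℕ → ℚ} {f : ℝ → ℝ}
    (hq : ∀ r : ℚ, ∃ n : ℕ, 0 < n ∧ q n = r)
    (hf1 : ∀ n : ℕ, 0 < n → f (q n) = 1 / (n : ℝ))
    (hf0 : ∀ x : ℝ, Irrational x → f x = 0) {x : ℝ} (hx : Irrational x) :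
    ContinuousAt f x := by
  rw [Metric.continuousAt_iff']
  intro ε hε
  obtain ⟨N, hN⟩ := exists_nat_one_div_lt hε
  -- The finitely many rationals `q n`, `n ≤ N`, include every point where `f` is at least `ε`.
  have hfin : ((fun n : ℕ => (q n : ℝ)) '' Set.Iic N).Finite := (Set.finite_Iic N).image _
  have hxs : x ∉ (fun n : ℕ => (q n : ℝ)) '' Set.Iic N := by
    rintro ⟨n, -, rfl⟩
    exact Rat.not_irrational _ hx
  filter_upwards [hfin.isClosed.isOpen_compl.mem_nhds hxs] with y hy
  rw [hf0 x hx]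
  by_cases hyi : Irrational y
  · simpa [hf0 y hyi] using hε
  · obtain ⟨r, rfl⟩ := not_not.1 hyi
    obtain ⟨n, hn, rfl⟩ := hq r
    have hNn : N < n := by
      by_contra hcon
      exact hy ⟨n, not_lt.1 hcon, rfl⟩
    have hle : (1 : ℝ) / n ≤ 1 / ((N : ℝ) + 1) :=
      one_div_le_one_div_of_le (by positivity) (by exact_mod_cast hNn)
    rw [hf1 n hn, Real.dist_eq, sub_zero, abs_of_nonneg (by positivity)]
    exact hle.trans_lt hN

theorem not_continuousAt_ratCast {q : ℕ → ℚ} {f : ℝ → ℝ}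
    (hq : ∀ r : ℚ, ∃ n : ℕ, 0 < n ∧ q n = r)
    (hf1 : ∀ n : ℕ, 0 < n → f (q n) = 1 / (n : ℝ))
    (hf0 : ∀ x : ℝ, Irrational x → f x = 0) (r : ℚ) :
    ¬ ContinuousAt f (r : ℝ) := by
  intro hc
  obtain ⟨n, hn, rfl⟩ := hq r
  have hpos : 0 < f (q n) := by
    rw [hf1 n hn]
    positivity
  obtain ⟨y, hy, hyi⟩ := mem_closure_iff_nhds.1 (dense_irrational (q n : ℝ)) _
    (hc.eventually (lt_mem_nhds hpos))
  have hy' : 0 < f y := hy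
  exact hy'.ne' (hf0 y hyi)

/-- Let `q` enumerate the rationals bijectively with indices `n ≥ 1` and let `f : ℝ → ℝ`
satisfy `f (q n) = 1 / n` for `n ≥ 1` and `f x = 0` for irrational `x`. Then the set of
continuity points of `f` is exactly the set of irrationals; consequently it is dense (so `f`
is cliquish), but its interior is empty, so `f` does not have the HCRP with respect to
`CLO ℝ`. -/
theorem continuity_points_example (q : ℕ → ℚ)
    (hq : ∀ r : ℚ, ∃! n : ℕ, 0 < n ∧ q n = r) (f : ℝ → ℝ)
    (hf1 : ∀ n : ℕ, 0 < n → f (q n) = 1 / (n : ℝ))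
    (hf0 : ∀ x : ℝ, Irrational x → f x = 0) :
    {x : ℝ | ContinuousAt f x} = {x : ℝ | Irrational x} ∧
    Dense {x : ℝ | ContinuousAt f x} ∧ Cliquish f ∧
    interior {x : ℝ | ContinuousAt f x} = ∅ ∧ ¬ HCRP f (CLO ℝ) := by
  have hq' : ∀ r : ℚ, ∃ n : ℕ, 0 < n ∧ q n = r := fun r => (hq r).exists
  have hC : {x : ℝ | ContinuousAt f x} = {x : ℝ | Irrational x} := by
    ext x
    refine ⟨fun hx => ?_, fun hx => continuousAt_of_irrational hq' hf1 hf0 hx⟩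
    rintro ⟨r, rfl⟩
    exact not_continuousAt_ratCast hq' hf1 hf0 r hx
  have hD : Dense {x : ℝ | ContinuousAt f x} := hC ▸ dense_irrational
  have hI : interior {x : ℝ | ContinuousAt f x} = ∅ := by
    rw [hC, interior_eq_empty_iff_dense_compl]
    refine Dense.mono ?_ (Rat.denseRange_cast (𝕜 := ℝ))
    rintro _ ⟨r, rfl⟩
    exact Rat.not_irrational r
  exact ⟨hC, hD, cliquish_of_dense_continuousAt hD, hI, not_hcrp_CLO hI⟩
end

section
/- Let X be a metric space with cardinality at least 𝔠 (the cardinality of the continuum), and let Σ = [X]^𝔠 be the family of all subsets of X of cardinality exactly 𝔠. Then every function f : X → ℝ has the HSOP with respect to Σ. -/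
open Filter Topology

universe u

/-- If `X` is a metric space of cardinality at least `𝔠`, then every `f : X → ℝ` has the
HSOP with respect to the family of all subsets of `X` of cardinality exactly `𝔠`. -/
theorem HSOP_card_continuum {X : Type u} [MetricSpace X]
    (hX : Cardinal.continuum.{u} ≤ Cardinal.mk X) (f : X → ℝ) :
    HSOP f {A : Set X | Cardinal.mk A = Cardinal.continuum.{u}} := by
  intro α hα P hP
  rw [Set.mem_ofPred_eq] at hP
  have hcof : Cardinal.aleph0.{u} < (Cardinal.continuum.{u}).ord.cof := by
    rw [← Cardinal.two_power_aleph0]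
    exact Cardinal.lt_cof_ord_power le_rfl (by norm_num)
  -- The pigeonhole lemma wants both types in one universe, hence `ULift ℤ`.
  obtain ⟨⟨n⟩, hn⟩ := Cardinal.infinite_pigeonhole_card
    (fun x : P => (ULift.up ⌊f x / (α / 2)⌋ : ULift.{u} ℤ)) Cardinal.continuum.{u}
    hP.ge Cardinal.aleph0_le_continuum (by simpa using hcof)
  have hQ : ∀ x ∈ {x ∈ P | ⌊f x / (α / 2)⌋ = n},
      n * (α / 2) ≤ f x ∧ f x < (n + 1) * (α / 2) := by
    rintro x ⟨-, hx⟩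
    rw [Int.floor_eq_iff] at hx
    exact ⟨(le_div_iff₀ (by positivity)).1 hx.1, (div_lt_iff₀ (by positivity)).1 hx.2⟩
  refine ⟨{x ∈ P | ⌊f x / (α / 2)⌋ = n}, le_antisymm ?_ ?_, fun x hx => hx.1, fun x _ => ?_⟩
  · exact (Cardinal.mk_le_mk_of_subset fun x hx => hx.1).trans hP.le
  · refine hn.trans (Cardinal.mk_le_of_injective
      (f := fun y => ⟨y.1.1, y.1.2, congrArg ULift.down y.2⟩) ?_)
    intro y z h
    exact Subtype.ext (Subtype.ext (Subtype.mk.inj h))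
  · have hlt : ENNReal.ofReal (α / 2) < ENNReal.ofReal α :=
      (ENNReal.ofReal_lt_ofReal_iff hα).2 (by linarith)
    refine lt_of_le_of_lt ((iInf₂_le (1 : ℝ) one_pos).trans (Metric.ediam_le ?_)) hlt
    rintro _ ⟨y, ⟨hy, -⟩, rfl⟩ _ ⟨z, ⟨hz, -⟩, rfl⟩
    rw [edist_dist, Real.dist_eq]
    apply ENNReal.ofReal_le_ofReal
    have hy := hQ y hy
    have hz := hQ z hz
    rw [abs_le]
    constructor <;> linarith
end
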